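/- arXiv:1511.09280 — 6 statements merged into one kernel-verified Lean document; each statement's English description precedes it below -/
import Mathlib

section
/- Let X be a Cantor space and g a minimal homeomorphism of X. Then the closure of the full group [g] in Homeo(X) (with the topology of uniform convergence) equals the set of all homeomorphisms h of X such that h_*μ = μ for every g-invariant Borel probability measure μ on X. -/
/-!
The inclusion of the closure in the set of homeomorphisms preserving all invariant measures holds
because an element of `[g]` is a power of `g` on each piece of a countable Borel partition
(`measure_preimage_of_inFullGroup`), because homeomorphisms uniformly close to `h` have the same
preimage of a given clopen set as `h`, and because clopen sets determine Borel measures.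

For the converse, let `h` preserve all invariant measures. It suffices to find, for each clopen set
`B` of a partition into small sets, a homeomorphism of `A = h⁻¹(B)` onto `B` moving points inside
their `g`-orbits; gluing these gives an element of `[g]` close to `h`. As `A` and `B` have the same
measure for every invariant measure, everything rests on the following two facts.

* Comparison (`exists_equidec_subset`): if `μ A < μ B` for all invariant `μ`, then `A` is mapped
  into `B` by a map which is locally a power of `g`. Along an orbit, read points of `A` as opening
  and points of `B` as closing parentheses, and send each opening parenthesis to its match. A point
  without a match would have an orbit visiting `A` more often than `B` in every initial segment, and
  a limit of its empirical measures would be an invariant `μ` with `μ B ≤ μ A`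
  (`exists_invariant_le`).

* Back-and-forth (`full_step`, `equidec_sdiff_singleton`): if `μ A = μ B` for all invariant `μ`,
  translate `B` by a power of `g` so that `A` and `B` share a point `p`. Removing a small clopen
  neighbourhood of `p` from `A` and a strictly smaller one from `B` makes the comparison lemma
  applicable; what is left has again equal measures, so the roles can be exchanged and the procedure
  repeated. In the limit `A \ {p}` and `B \ {p}` are cut into open pieces matched by powers of `g`,
  and the resulting bijection extends continuously by `p ↦ p`
  (`Equidec.exists_bijOn_of_sdiff_singleton`).
-/

open MeasureTheory

namespace DynSimplex

variable {X : Type*} [TopologicalSpace X] [MeasurableSpace X] [OpensMeasurableSpace X]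

/-- `g` preserves the probability measure `μ`, i.e. `g_*μ = μ`. -/
def Preserves (g : X ≃ₜ X) (μ : ProbabilityMeasure X) : Prop :=
  (μ : Measure X).map g = (μ : Measure X)

/-- A homeomorphism is minimal if all of its (two-sided) orbits are dense. -/
def IsMinimal (g : X ≃ₜ X) : Prop :=
  ∀ x : X, Dense (Set.range fun n : ℤ => (g.toEquiv ^ n) x)

/-- A set of probability measures is good if for all clopen `A`, `B` with `μ A < μ B` for
all `μ ∈ K`, there is a clopen `C ⊆ B` with `μ C = μ A` for all `μ ∈ K`. -/
def Good (K : Set (ProbabilityMeasure X)) : Prop :=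
  ∀ A B : Set X, IsClopen A → IsClopen B → (∀ μ ∈ K, μ A < μ B) →
    ∃ C : Set X, IsClopen C ∧ C ⊆ B ∧ ∀ μ ∈ K, μ C = μ A

/-- Approximate divisibility of a set of probability measures. -/
def ApproximatelyDivisible (K : Set (ProbabilityMeasure X)) : Prop :=
  ∀ A : Set X, IsClopen A → ∀ n : ℕ, 1 ≤ n → ∀ ε : ℝ, 0 < ε →
    ∃ B : Set X, IsClopen B ∧ B ⊆ A ∧
      ∀ μ ∈ K, (μ A : ℝ) - ε ≤ (n : ℝ) * (μ B : ℝ) ∧ (n : ℝ) * (μ B : ℝ) ≤ (μ A : ℝ)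

/-- A probability measure has full support if every nonempty open set has positive measure. -/
def FullSupport (μ : ProbabilityMeasure X) : Prop :=
  ∀ U : Set X, IsOpen U → U.Nonempty → 0 < μ U

/-- A probability measure is atomless if all singletons are null. -/
def Atomless (μ : ProbabilityMeasure X) : Prop :=
  ∀ x : X, μ {x} = 0

/-- Convexity of a set of probability measures (as a subset of the `ℝ≥0`-module of
finite measures). -/
def ProbConvex (K : Set (ProbabilityMeasure X)) : Prop :=
  Convex NNReal (ProbabilityMeasure.toFiniteMeasure '' K)

/-- The set of extreme points of a set of probability measures. -/
def ProbExtremePoints (K : Set (ProbabilityMeasure X)) : Set (ProbabilityMeasure X) :=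
  ProbabilityMeasure.toFiniteMeasure ⁻¹'
    (Set.extremePoints NNReal (ProbabilityMeasure.toFiniteMeasure '' K))

/-- A dynamical simplex: a nonempty compact convex set of atomless, fully supported
probability measures which is good and approximately divisible. -/
def DynamicalSimplex (K : Set (ProbabilityMeasure X)) : Prop :=
  K.Nonempty ∧ IsCompact K ∧ ProbConvex K ∧
    (∀ μ ∈ K, Atomless μ ∧ FullSupport μ) ∧ Good K ∧ ApproximatelyDivisible K

/-- Membership in the full group of `g`. -/
def InFullGroup (g h : X ≃ₜ X) : Prop :=
  ∀ x : X, ∃ n : ℤ, h x = (g.toEquiv ^ n) x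

/-- Membership in the topological full group of `g`: `h` is given piecewise by powers of `g`
on a finite clopen partition of `X`. -/
def InTopologicalFullGroup (g h : X ≃ₜ X) : Prop :=
  ∃ (k : ℕ) (A : Fin k → Set X) (n : Fin k → ℤ),
    (∀ i, IsClopen (A i)) ∧ (∀ x : X, ∃! i, x ∈ A i) ∧
    ∀ i, ∀ x ∈ A i, h x = (g.toEquiv ^ (n i)) x

/-- `g` preserves every measure in `K` (i.e. `g` belongs to the group `G`). -/
def PreservesAll (K : Set (ProbabilityMeasure X)) (g : X ≃ₜ X) : Prop :=
  ∀ μ ∈ K, Preserves g μ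

/-- `g` is `K`-saturated: any two `K`-equivalent clopen sets are mapped one to the other by
an element of the topological full group of `g`. -/
def KSaturated (K : Set (ProbabilityMeasure X)) (g : X ≃ₜ X) : Prop :=
  ∀ U V : Set X, IsClopen U → IsClopen V → (∀ μ ∈ K, μ U = μ V) →
    ∃ h : X ≃ₜ X, InTopologicalFullGroup g h ∧ h '' U = V

/-- The topology of uniform convergence on the homeomorphism group of a compact space
(the compact-open topology, induced from `C(X, X)`). -/
instance : TopologicalSpace (X ≃ₜ X) :=
  TopologicalSpace.induced (fun h : X ≃ₜ X => (h : C(X, X))) inferInstance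

/-- A KR-partition for `K`: a finite family of columns, each column being a finite sequence of
clopen sets which are all `K`-equivalent, the atoms of all columns forming a partition of `X`. -/
structure KRPartition (X : Type*) [TopologicalSpace X] [MeasurableSpace X]
    (K : Set (ProbabilityMeasure X)) where
  numCols : ℕ
  height : Fin numCols → ℕ
  atom : (i : Fin numCols) → Fin (height i + 1) → Set X
  clopen : ∀ i j, IsClopen (atom i j)
  equivK : ∀ i j j', ∀ μ ∈ K, μ (atom i j) = μ (atom i j')
  partition : ∀ x : X, ∃! p : (i : Fin numCols) × Fin (height i + 1), x ∈ atom p.1 p.2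

/-- The base of a KR-partition: the union of the first atoms of the columns. -/
def KRPartition.base {K : Set (ProbabilityMeasure X)} (T : KRPartition X K) : Set X :=
  ⋃ i, T.atom i 0

/-- The top of a KR-partition: the union of the last atoms of the columns. -/
def KRPartition.top {K : Set (ProbabilityMeasure X)} (T : KRPartition X K) : Set X :=
  ⋃ i, T.atom i (Fin.last _)

/-- `S` refines `T`: the base (resp. top) of `S` is contained in the base (resp. top) of `T`,
and every column of `S` is obtained by cutting and stacking columns of `T`. -/
def KRPartition.Refines {K : Set (ProbabilityMeasure X)} (S T : KRPartition X K) : Prop :=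
  S.base ⊆ T.base ∧ S.top ⊆ T.top ∧
  ∀ c : Fin S.numCols, ∃ (m : ℕ) (idx : Fin (m + 1) → Fin T.numCols)
    (piece : (k : Fin (m + 1)) → Fin (T.height (idx k) + 1) → Set X),
    (∀ k j, piece k j ⊆ T.atom (idx k) j) ∧
    (S.height c + 1 = ∑ k : Fin (m + 1), (T.height (idx k) + 1)) ∧
    ∀ (k : Fin (m + 1)) (j : Fin (T.height (idx k) + 1))
      (hlt : (∑ l ∈ Finset.Iio k, (T.height (idx l) + 1)) + (j : ℕ) < S.height c + 1),
      S.atom c ⟨(∑ l ∈ Finset.Iio k, (T.height (idx l) + 1)) + (j : ℕ), hlt⟩ = piece k j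

/-- A KR-partition is compatible with a clopen set `U` if `U` is a union of its atoms,
equivalently every atom is either contained in `U` or disjoint from it. -/
def KRPartition.Compatible {K : Set (ProbabilityMeasure X)} (S : KRPartition X K)
    (U : Set X) : Prop :=
  ∀ i j, S.atom i j ⊆ U ∨ Disjoint (S.atom i j) U

end DynSimplex

namespace FullGroupClosure

open Set Filter Topology MeasureTheory DynSimplex

/-! ### Equidecomposability by powers of `g` -/

section Equidecomposition

/-- A decreasing sequence of sets with intersection `{p}` exhausts `A 0 \ {p}` by its consecutive
differences. -/
lemma sdiff_singleton_eq_iUnion {X : Type*} {A : ℕ → Set X} {p : X} (hA : Antitone A)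
    (hp : ∀ n, p ∈ A n)
    (hint : ∀ x, (∀ n, x ∈ A n) → x = p) :
    A 0 \ {p} = ⋃ n, A n \ A (n + 1) := by
  classical
  ext x
  simp only [Set.mem_sdiff, mem_singleton_iff, mem_iUnion]
  constructor
  · rintro ⟨h0, hxp⟩
    have hex : ∃ n, x ∉ A n := by
      by_contra! hcon
      exact hxp (hint x hcon)
    rcases hn : Nat.find hex with _ | n
    · exact absurd h0 (hn ▸ Nat.find_spec hex)
    · refine ⟨n, ?_, hn ▸ Nat.find_spec hex⟩
      by_contra hcon
      exact Nat.find_min hex (by omega) hcon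
  · rintro ⟨n, hn, hn'⟩
    exact ⟨hA (Nat.zero_le n) hn, fun h => hn' (h ▸ hp _)⟩

lemma eq_of_mem_sdiff {X : Type*} {A : ℕ → Set X} (hA : Antitone A) (i j : ℕ) (x : X)
    (hi : x ∈ A i \ A (i + 1)) (hj : x ∈ A j \ A (j + 1)) : i = j := by
  by_contra hne
  rcases lt_or_gt_of_ne hne with h | h
  · exact hi.2 (hA h hj.1)
  · exact hj.2 (hA h hi.1)

variable {X : Type*} [TopologicalSpace X]

lemma zpow_apply_eq (g : X ≃ₜ X) (n : ℤ) (x : X) : (g ^ n) x = (g.toEquiv ^ n) x := by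
  let F : (X ≃ₜ X) →* Equiv.Perm X :=
    { toFun := fun h => h.toEquiv, map_one' := rfl, map_mul' := fun _ _ => rfl }
  have h : F (g ^ n) = (F g) ^ n := map_zpow F g n
  exact congrArg (fun e : Equiv.Perm X => e x) h

lemma zpow_natCast_apply (g : X ≃ₜ X) (n : ℕ) (x : X) : (g ^ (n : ℤ)) x = g^[n] x := by
  induction n with
  | zero => simp
  | succ n ih =>
    rw [Function.iterate_succ_apply', ← ih, Nat.cast_succ, add_comm, zpow_add, zpow_one,
      Homeomorph.mul_apply]

/-- The pieces `P k` are open, partition `A`, and their translates `g ^ k (P k)` partition `B`.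
Disjointness is stated pointwise. Neither finiteness of the number of nonempty pieces nor
clopenness of `A` and `B` is required. -/
structure IsDecomp (g : X ≃ₜ X) (A B : Set X) (P : ℤ → Set X) : Prop where
  isOpen : ∀ k, IsOpen (P k)
  disj : ∀ k l x, x ∈ P k → x ∈ P l → k = l
  source : ∀ x, x ∈ A ↔ ∃ k, x ∈ P k
  disj_image : ∀ k l x y, x ∈ P k → y ∈ P l → (g ^ k) x = (g ^ l) y → k = l
  target : ∀ y, y ∈ B ↔ ∃ k, ∃ x ∈ P k, (g ^ k) x = y

/-- `A` and `B` are equidecomposable: `A` can be cut into countably many open pieces which are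
moved by powers of `g` so as to partition `B`. -/
def Equidec (g : X ≃ₜ X) (A B : Set X) : Prop := ∃ P, IsDecomp g A B P

variable {g : X ≃ₜ X} {A B : Set X} {P : ℤ → Set X}

lemma zpow_neg_apply_zpow (g : X ≃ₜ X) (k : ℤ) (x : X) : (g ^ (-k)) ((g ^ k) x) = x := by
  rw [← Homeomorph.mul_apply, ← zpow_add]; simp

lemma zpow_apply_zpow_neg (g : X ≃ₜ X) (k : ℤ) (x : X) : (g ^ k) ((g ^ (-k)) x) = x := by
  rw [← Homeomorph.mul_apply, ← zpow_add]; simp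

lemma IsDecomp.symm (h : IsDecomp g A B P) :
    IsDecomp g B A (fun k => (g ^ k) ⁻¹' P (-k)) where
  isOpen k := (h.isOpen _).preimage (g ^ k).continuous
  disj k l x hk hl := by
    have := h.disj_image _ _ _ _ hk hl (by rw [zpow_neg_apply_zpow, zpow_neg_apply_zpow])
    omega
  source y := by
    rw [h.target]
    constructor
    · rintro ⟨k, x, hx, rfl⟩
      refine ⟨-k, ?_⟩
      simpa [zpow_neg_apply_zpow] using hx
    · rintro ⟨k, hk⟩
      exact ⟨-k, _, hk, zpow_neg_apply_zpow g k y⟩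
  disj_image k l x y hx hy hxy := by
    have hx' : (g ^ k) x ∈ P (-k) := hx
    have hy' : (g ^ l) y ∈ P (-l) := hy
    rw [hxy] at hx'
    have := h.disj _ _ _ hx' hy'
    omega
  target x := by
    rw [h.source]
    constructor
    · rintro ⟨k, hk⟩
      refine ⟨-k, (g ^ k) x, ?_, zpow_neg_apply_zpow g k x⟩
      simpa [zpow_neg_apply_zpow] using hk
    · rintro ⟨k, y, hy, rfl⟩
      exact ⟨-k, hy⟩

lemma Equidec.symm (h : Equidec g A B) : Equidec g B A := by
  obtain ⟨P, hP⟩ := h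
  exact ⟨_, hP.symm⟩

lemma IsDecomp.mem_target (h : IsDecomp g A B P) {k : ℤ} {x : X} (hx : x ∈ P k) :
    (g ^ k) x ∈ B := (h.target _).2 ⟨k, x, hx, rfl⟩

lemma Equidec.iUnion {ι : Type*} {A B : ι → Set X} (h : ∀ i, Equidec g (A i) (B i))
    (hA : ∀ i j x, x ∈ A i → x ∈ A j → i = j) (hB : ∀ i j x, x ∈ B i → x ∈ B j → i = j) :
    Equidec g (⋃ i, A i) (⋃ i, B i) := by
  choose P hP using h
  refine ⟨fun k => ⋃ i, P i k, fun k => isOpen_iUnion fun i => (hP i).isOpen k, ?_, ?_, ?_, ?_⟩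
  · intro k l x hk hl
    obtain ⟨i, hi⟩ := mem_iUnion.1 hk
    obtain ⟨j, hj⟩ := mem_iUnion.1 hl
    obtain rfl := hA i j x (((hP i).source x).2 ⟨_, hi⟩) (((hP j).source x).2 ⟨_, hj⟩)
    exact (hP i).disj _ _ _ hi hj
  · intro x
    simp only [mem_iUnion]
    rw [exists_comm]
    exact exists_congr fun i => (hP i).source x
  · intro k l x y hk hl hxy
    obtain ⟨i, hi⟩ := mem_iUnion.1 hk
    obtain ⟨j, hj⟩ := mem_iUnion.1 hl
    obtain rfl := hB i j _ ((hP i).mem_target hi) (hxy ▸ (hP j).mem_target hj)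
    exact (hP i).disj_image _ _ _ _ hi hj hxy
  · intro y
    simp only [mem_iUnion]
    constructor
    · rintro ⟨i, hi⟩
      obtain ⟨k, x, hx, hxy⟩ := ((hP i).target y).1 hi
      exact ⟨k, x, ⟨i, hx⟩, hxy⟩
    · rintro ⟨k, x, ⟨i, hx⟩, rfl⟩
      exact ⟨i, (hP i).mem_target hx⟩

lemma Equidec.union {A' B' : Set X} (h : Equidec g A B) (h' : Equidec g A' B')
    (hA : Disjoint A A') (hB : Disjoint B B') : Equidec g (A ∪ A') (B ∪ B') := by
  rw [union_eq_iUnion, union_eq_iUnion]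
  have aux : ∀ S T : Set X, Disjoint S T → ∀ i j x,
      x ∈ (cond i S T) → x ∈ (cond j S T) → i = j := by
    intro S T hST i j x hi hj
    rw [Set.disjoint_left] at hST
    cases i <;> cases j <;> simp_all
  exact Equidec.iUnion (fun i => by cases i <;> assumption) (aux _ _ hA) (aux _ _ hB)

lemma IsDecomp.exists_fun (h : IsDecomp g A B P) :
    ∃ f : X → X, ∀ k, ∀ x ∈ P k, f x = (g ^ k) x := by
  classical
  refine ⟨fun x => if hx : ∃ k, x ∈ P k then (g ^ hx.choose) x else x, fun k x hx => ?_⟩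
  have hex : ∃ k, x ∈ P k := ⟨k, hx⟩
  have : hex.choose = k := h.disj _ _ _ hex.choose_spec hx
  simp only [dif_pos hex, this]

lemma IsDecomp.continuousOn (h : IsDecomp g A B P) {f : X → X}
    (hf : ∀ k, ∀ x ∈ P k, f x = (g ^ k) x) : ContinuousOn f A := by
  intro x hx
  obtain ⟨k, hk⟩ := (h.source x).1 hx
  have : f =ᶠ[𝓝 x] ⇑(g ^ k) := by
    filter_upwards [(h.isOpen k).mem_nhds hk] with y hy using hf k y hy
  exact ((g ^ k).continuous.continuousAt.congr this.symm).continuousWithinAt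

/-- The piecewise maps `A → B` and `B → A` attached to an equidecomposition. -/
lemma Equidec.exists_maps (h : Equidec g A B) : ∃ f f' : X → X,
    MapsTo f A B ∧ MapsTo f' B A ∧ InvOn f' f A B ∧ ContinuousOn f A ∧ ContinuousOn f' B ∧
    ∀ x ∈ A, ∃ n : ℤ, f x = (g ^ n) x := by
  obtain ⟨P, hP⟩ := h
  obtain ⟨f, hf⟩ := hP.exists_fun
  obtain ⟨f', hf'⟩ := hP.symm.exists_fun
  have key : ∀ k, ∀ x ∈ P k, f' ((g ^ k) x) = x := by
    intro k x hx
    rw [hf' (-k) _ (by simpa [zpow_neg_apply_zpow] using hx), zpow_neg_apply_zpow]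
  refine ⟨f, f', ?_, ?_, ⟨?_, ?_⟩, hP.continuousOn hf, hP.symm.continuousOn hf', ?_⟩
  · intro x hx
    obtain ⟨k, hk⟩ := (hP.source x).1 hx
    rw [hf k x hk]
    exact hP.mem_target hk
  · intro y hy
    obtain ⟨k, x, hx, rfl⟩ := (hP.target y).1 hy
    rw [key k x hx]
    exact (hP.source x).2 ⟨k, hx⟩
  · intro x hx
    obtain ⟨k, hk⟩ := (hP.source x).1 hx
    rw [hf k x hk, key k x hk]
  · intro y hy
    obtain ⟨k, x, hx, rfl⟩ := (hP.target y).1 hy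
    rw [key k x hx, hf k x hx]
  · intro x hx
    obtain ⟨k, hk⟩ := (hP.source x).1 hx
    exact ⟨k, hf k x hk⟩

lemma Equidec.isOpen (h : Equidec g A B) : IsOpen B := by
  obtain ⟨P, hP⟩ := h
  have : B = ⋃ k, ⇑(g ^ k) '' P k := by
    ext y; simp [hP.target]
  rw [this]
  exact isOpen_iUnion fun k => (g ^ k).isOpenMap _ (hP.isOpen k)

lemma Equidec.isClopen [T2Space X] (h : Equidec g A B) (hA : IsCompact A) : IsClopen B := by
  obtain ⟨f, f', hf, hf', hinv, hc, -, -⟩ := h.exists_maps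
  have : f '' A = B := (hinv.bijOn hf hf').image_eq
  exact ⟨this ▸ (hA.image_of_continuousOn hc).isClosed, h.isOpen⟩

/-- An equidecomposition of `A \ {p}` and `B \ {p}` extends to a continuous bijection `A → B`
fixing `p`. Continuity at `p` is automatic because the inverse is continuous off `p`: it carries
the compact set `B \ V`, for `V` a neighbourhood of `p`, to a compact subset of `A` avoiding
`p`. -/
lemma Equidec.exists_bijOn_of_sdiff_singleton [T2Space X] [CompactSpace X] {p : X}
    (hB : IsClosed B) (hpA : p ∈ A) (hpB : p ∈ B) (h : Equidec g (A \ {p}) (B \ {p})) :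
    ∃ f : X → X, BijOn f A B ∧ ContinuousOn f A ∧ ∀ x ∈ A, ∃ n : ℤ, f x = (g ^ n) x := by
  classical
  obtain ⟨f, f', hf, hf', hinv, hc, hc', hn⟩ := h.exists_maps
  have hAo : IsOpen (A \ {p}) := h.symm.isOpen
  have hup : ∀ x, x ≠ p → Function.update f p p x = f x := fun x hx => by
    simp [Function.update, hx]
  refine ⟨Function.update f p p, ⟨?_, ?_, ?_⟩, ?_, ?_⟩
  · intro x hx
    rcases eq_or_ne x p with rfl | hxp
    · simpa using hpB
    · rw [hup x hxp]; exact (hf ⟨hx, hxp⟩).1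
  · intro x hx y hy hxy
    rcases eq_or_ne x p with rfl | hxp
    · rcases eq_or_ne y x with rfl | hyp
      · rfl
      · rw [hup y hyp, Function.update_self] at hxy
        exact absurd hxy.symm (hf ⟨hy, hyp⟩).2
    · rcases eq_or_ne y p with rfl | hyp
      · rw [hup x hxp, Function.update_self] at hxy
        exact absurd hxy (hf ⟨hx, hxp⟩).2
      · rw [hup x hxp, hup y hyp] at hxy
        exact hinv.1.injOn ⟨hx, hxp⟩ ⟨hy, hyp⟩ hxy
  · intro y hy
    rcases eq_or_ne y p with rfl | hyp
    · exact ⟨y, hpA, by simp⟩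
    · have := hf' ⟨hy, hyp⟩
      exact ⟨f' y, this.1, by rw [hup _ this.2]; exact hinv.2 ⟨hy, hyp⟩⟩
  · intro x hx
    rcases eq_or_ne x p with rfl | hxp
    · rw [ContinuousWithinAt, Function.update_self, tendsto_def]
      intro V hV
      obtain ⟨W, hWV, hW, hxW⟩ := mem_nhds_iff.1 hV
      have hsub : B \ W ⊆ B \ {x} := sdiff_subset_sdiff_right (singleton_subset_iff.2 hxW)
      have hK : IsCompact (Set.image f' (B \ W)) :=
        (hB.sdiff hW).isCompact.image_of_continuousOn (hc'.mono hsub)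
      have hxK : x ∈ (Set.image f' (B \ W))ᶜ := by
        rintro ⟨y, hy, hyx⟩
        exact (hf' (hsub hy)).2 hyx
      filter_upwards [mem_nhdsWithin_of_mem_nhds (hK.isClosed.isOpen_compl.mem_nhds hxK),
        self_mem_nhdsWithin] with z hz hzA
      apply hWV
      rcases eq_or_ne z x with rfl | hzx
      · simpa using hxW
      · rw [hup z hzx]
        by_contra hcon
        exact hz ⟨f z, ⟨(hf ⟨hzA, hzx⟩).1, hcon⟩, hinv.1 ⟨hzA, hzx⟩⟩
    · have h1 : ContinuousAt f x := hc.continuousAt (hAo.mem_nhds ⟨hx, hxp⟩)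
      have h2 : Function.update f p p =ᶠ[𝓝 x] f := by
        filter_upwards [isOpen_ne.mem_nhds hxp] with y hy using hup y hy
      exact (h1.congr h2.symm).continuousWithinAt
  · intro x hx
    rcases eq_or_ne x p with rfl | hxp
    · exact ⟨0, by simp⟩
    · rw [hup x hxp]; exact hn x ⟨hx, hxp⟩

end Equidecomposition

/-! ### Invariant measures -/

section Measures

variable {X : Type*} [TopologicalSpace X] [MeasurableSpace X] [BorelSpace X]
  {g : X ≃ₜ X} {μ : ProbabilityMeasure X}

lemma preserves_zpow (h : Preserves g μ) (n : ℤ) : Preserves (g ^ n) μ := by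
  let G : Subgroup (X ≃ₜ X) :=
    { carrier := {k | Preserves k μ}
      mul_mem' := by
        intro a b ha hb
        have hab : (⇑(a * b) : X → X) = a ∘ b := rfl
        change Measure.map _ _ = _
        rw [hab, ← Measure.map_map a.continuous.measurable b.continuous.measurable, hb, ha]
      one_mem' := Measure.map_id
      inv_mem' := by
        intro a ha
        have ha' : Measure.map a (μ : Measure X) = μ := ha
        change Measure.map (⇑a⁻¹) _ = _
        conv_lhs => rw [← ha']
        rw [Measure.map_map (a⁻¹).continuous.measurable a.continuous.measurable]
        have : (⇑a⁻¹ ∘ ⇑a : X → X) = id := by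
          ext x; exact a.symm_apply_apply x
        rw [this, Measure.map_id] }
  exact zpow_mem (S := Subgroup (X ≃ₜ X)) (K := G) h n

lemma measure_zpow_image (h : Preserves g μ) (n : ℤ) (S : Set X) :
    (μ : Measure X) (⇑(g ^ n) '' S) = (μ : Measure X) S := by
  have h1 : Measure.map ⇑(g ^ n) (μ : Measure X) = μ := preserves_zpow h n
  conv_lhs => rw [← h1]
  rw [← Homeomorph.toMeasurableEquiv_coe, MeasurableEquiv.map_apply,
    Homeomorph.toMeasurableEquiv_coe, preimage_image_eq _ (g ^ n).injective]

lemma measure_iUnion_image {ι : Type*} [Countable ι] (h : Preserves g μ) (n : ι → ℤ)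
    (Q : ι → Set X) (hQ : ∀ i, MeasurableSet (Q i)) (hd : Pairwise (Function.onFun Disjoint Q))
    (hd' : Pairwise (Function.onFun Disjoint fun i => ⇑(g ^ n i) '' Q i)) :
    (μ : Measure X) (⋃ i, ⇑(g ^ n i) '' Q i) = (μ : Measure X) (⋃ i, Q i) := by
  rw [measure_iUnion hd hQ, measure_iUnion hd']
  · exact tsum_congr fun i => measure_zpow_image h _ _
  · intro i
    rw [← Homeomorph.toMeasurableEquiv_coe]
    exact (MeasurableEquiv.measurableSet_image _).2 (hQ i)

lemma Equidec.measure_eq {A B : Set X} (h : Equidec g A B) (hμ : Preserves g μ) :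
    (μ : Measure X) A = (μ : Measure X) B := by
  obtain ⟨P, hP⟩ := h
  have hA : A = ⋃ k, P k := by ext x; simp [hP.source]
  have hB : B = ⋃ k, ⇑(g ^ k) '' P k := by ext x; simp [hP.target]
  rw [hA, hB]
  refine (measure_iUnion_image hμ id P (fun k => (hP.isOpen k).measurableSet) ?_ ?_).symm
  · intro k l hkl
    exact Set.disjoint_left.2 fun x hk hl => hkl (hP.disj _ _ _ hk hl)
  · intro k l hkl
    refine Set.disjoint_left.2 ?_
    rintro _ ⟨x, hx, rfl⟩ ⟨y, hy, hxy⟩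
    exact hkl (hP.disj_image _ _ _ _ hx hy hxy.symm)

/-- Elements of the full group preserve all `g`-invariant measures: they are piecewise powers of
`g` on a countable Borel partition. -/
lemma measure_preimage_of_inFullGroup [T2Space X] {f : X ≃ₜ X} (hf : InFullGroup g f)
    (hμ : Preserves g μ) {S : Set X} (hS : MeasurableSet S) :
    (μ : Measure X) (f ⁻¹' S) = (μ : Measure X) S := by
  obtain ⟨e⟩ : Nonempty (ℕ ≃ ℤ) := ⟨Equiv.intEquivNat.symm⟩
  set R : ℕ → Set X := fun i => {x | f x = (g ^ e i) x}
  have hR : ∀ i, MeasurableSet (R i) := fun i =>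
    (isClosed_eq f.continuous (g ^ e i).continuous).measurableSet
  have hRu : ⋃ i, disjointed R i = univ := by
    rw [iUnion_disjointed]
    refine eq_univ_of_forall fun x => mem_iUnion.2 ?_
    obtain ⟨n, hn⟩ := hf x
    exact ⟨e.symm n, by simpa [R, zpow_apply_eq] using hn⟩
  set Q : ℕ → Set X := fun i => f ⁻¹' S ∩ disjointed R i
  have him : ∀ i, ⇑(g ^ e i) '' Q i = f '' Q i := fun i =>
    image_congr fun x hx => ((disjointed_subset R i) hx.2 : f x = (g ^ e i) x).symm
  have hQu : ⋃ i, Q i = f ⁻¹' S := by rw [← inter_iUnion, hRu, inter_univ]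
  have hQd : Pairwise (Function.onFun Disjoint Q) := fun i j hij =>
    (disjoint_disjointed R hij).mono inter_subset_right inter_subset_right
  have key := measure_iUnion_image hμ (fun i => e i) Q
    (fun i => (f.continuous.measurable hS).inter (MeasurableSet.disjointed hR i)) hQd ?_
  · simp only [him, ← image_iUnion, hQu, image_preimage_eq _ f.surjective] at key
    exact key.symm
  · intro i j hij
    simp only [Function.onFun, him]
    exact (disjoint_image_iff f.injective).2 (hQd hij)

lemma measure_pos (hg : IsMinimal g) (hμ : Preserves g μ) {U : Set X} (hU : IsOpen U)
    (hne : U.Nonempty) : 0 < (μ : Measure X) U := by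
  rw [pos_iff_ne_zero]
  intro h0
  have hcov : ⋃ n : ℤ, ⇑(g ^ n) '' U = univ := by
    refine eq_univ_of_forall fun x => mem_iUnion.2 ?_
    obtain ⟨_, hy, n, rfl⟩ := (hg x).inter_open_nonempty U hU hne
    refine ⟨-n, _, hy, ?_⟩
    simp only [← zpow_apply_eq]
    exact zpow_neg_apply_zpow g n x
  have : (μ : Measure X) univ = 0 := by
    rw [← hcov]
    exact measure_iUnion_null fun n => by rw [measure_zpow_image hμ, h0]
  simp at this

/-- `A` and `B` have the same measure for every `g`-invariant probability measure. -/
def SameMeasure (g : X ≃ₜ X) (A B : Set X) : Prop :=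
  ∀ μ : ProbabilityMeasure X, Preserves g μ →
    (μ : Measure X).real A = (μ : Measure X).real B

/-- The uniform measure on the orbit segment `x, g x, …, g ^ N x`. -/
noncomputable def empirical (g : X ≃ₜ X) (x : X) (N : ℕ) : ProbabilityMeasure X :=
  ⟨((N + 1 : ℕ) : ENNReal)⁻¹ • ∑ i ∈ Finset.range (N + 1), Measure.dirac (g^[i] x), ⟨by
    simp only [Measure.smul_apply, Measure.finsetSum_apply, measure_univ, Finset.sum_const,
      Finset.card_range, nsmul_eq_mul, mul_one, smul_eq_mul]
    exact ENNReal.inv_mul_cancel (by simp) (ENNReal.natCast_ne_top _)⟩⟩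

lemma empirical_apply (g : X ≃ₜ X) (x : X) (N : ℕ) {C : Set X} (hC : IsClopen C) :
    ((empirical g x N C : NNReal) : ℝ) =
      (∑ i ∈ Finset.range (N + 1), C.indicator (fun _ => (1 : ℝ)) (g^[i] x)) / (N + 1) := by
  have : ((empirical g x N C : NNReal) : ℝ) = ((empirical g x N : Measure X) C).toReal := rfl
  rw [this]
  simp only [empirical, ProbabilityMeasure.coe_mk, Measure.smul_apply, Measure.finsetSum_apply,
    smul_eq_mul, ENNReal.toReal_mul, ENNReal.toReal_inv, ENNReal.toReal_natCast]
  rw [ENNReal.toReal_sum (fun _ _ => measure_ne_top _ _), div_eq_inv_mul]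
  push_cast
  congr 1
  refine Finset.sum_congr rfl fun i _ => ?_
  rw [Measure.dirac_apply' _ hC.isOpen.measurableSet]
  by_cases hi : g^[i] x ∈ C <;> simp [hi]

variable [CompactSpace X] [TopologicalSpace.MetrizableSpace X] [TotallyDisconnectedSpace X]

/-- Borel probability measures are determined by their values on clopen sets, as these form a
`π`-system generating the Borel `σ`-algebra. -/
lemma measure_ext_clopen {μ ν : Measure X} [IsProbabilityMeasure μ] [IsProbabilityMeasure ν]
    (h : ∀ C, IsClopen C → μ C = ν C) : μ = ν := by
  let _ := TopologicalSpace.metrizableSpaceMetric X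
  refine ext_of_generate_finite {s | IsClopen s} ?_ ?_ h (by simp)
  · rw [BorelSpace.measurable_eq (α := X)]
    exact isTopologicalBasis_isClopen.borel_eq_generateFrom
  · intro s hs t ht _
    exact IsClopen.inter hs ht

/-- If `A` is visited at least as often as `B` along every initial segment of the orbit of `x`,
then a limit of the empirical measures of this orbit is an invariant measure giving `B` at most
the mass of `A`. -/
lemma exists_invariant_le (x : X) {A B : Set X} (hA : IsClopen A) (hB : IsClopen B)
    (h : ∀ N, birkhoffSum g (fun y => B.indicator (fun _ => (1 : ℤ)) y -
      A.indicator (fun _ => (1 : ℤ)) y) (N + 1) x ≤ 0) :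
    ∃ μ : ProbabilityMeasure X, Preserves g μ ∧ (μ : Measure X) B ≤ (μ : Measure X) A := by
  let _ := TopologicalSpace.metrizableSpaceMetric X
  let F : Ultrafilter ℕ := hyperfilter ℕ
  have hF : (F : Filter ℕ) ≤ atTop := Nat.hyperfilter_le_atTop
  let ν := (F.map (empirical g x)).lim
  have hlim : Tendsto (empirical g x) F (𝓝 ν) := (F.map (empirical g x)).le_nhds_lim
  have hC : ∀ C : Set X, IsClopen C →
      Tendsto (fun N => ((empirical g x N C : NNReal) : ℝ)) F (𝓝 ((ν C : NNReal) : ℝ)) := by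
    intro C hC
    refine (NNReal.continuous_coe.tendsto _).comp
      (ProbabilityMeasure.tendsto_measure_of_null_frontier_of_tendsto hlim ?_)
    rw [hC.frontier_eq]; simp
  refine ⟨ν, ?_, ?_⟩
  · have : IsProbabilityMeasure (Measure.map g (ν : Measure X)) :=
      Measure.isProbabilityMeasure_map g.continuous.measurable.aemeasurable
    refine measure_ext_clopen fun C hCl => ?_
    rw [Measure.map_apply g.continuous.measurable hCl.isOpen.measurableSet]
    have hpre : IsClopen (g ⁻¹' C) := hCl.preimage g.continuous
    have h0 : Tendsto (fun N => ((empirical g x N (g ⁻¹' C) : NNReal) : ℝ) -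
        ((empirical g x N C : NNReal) : ℝ)) F (𝓝 0) := by
      refine Tendsto.mono_left ?_ hF
      refine squeeze_zero_norm (fun N => ?_) tendsto_one_div_add_atTop_nhds_zero_nat
      rw [empirical_apply g x N hCl, empirical_apply g x N hpre, ← sub_div, Real.norm_eq_abs,
        abs_div, abs_of_pos (Nat.cast_add_one_pos N : (0 : ℝ) < N + 1)]
      gcongr
      have e : ∀ i, (g ⁻¹' C).indicator (fun _ => (1 : ℝ)) (g^[i] x) =
          C.indicator (fun _ => (1 : ℝ)) (g^[i + 1] x) := by
        intro i
        rw [Function.iterate_succ_apply']; rfl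
      simp only [e]
      rw [Finset.sum_range_succ, Finset.sum_range_succ' _ N]
      have b : ∀ y, 0 ≤ C.indicator (fun _ => (1 : ℝ)) y ∧ C.indicator (fun _ => (1 : ℝ)) y ≤ 1 :=
        fun y => by by_cases hy : y ∈ C <;> simp [hy]
      have b1 := b (g^[N + 1] x)
      have b2 := b (g^[0] x)
      rw [abs_le]
      constructor <;> linarith
    have heq := tendsto_nhds_unique h0 ((hC _ hpre).sub (hC _ hCl))
    have : ν (g ⁻¹' C) = ν C := by
      apply NNReal.coe_injective; linarith
    rw [← ProbabilityMeasure.ennreal_coeFn_eq_coeFn_toMeasure,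
      ← ProbabilityMeasure.ennreal_coeFn_eq_coeFn_toMeasure, this]
  · rw [← ProbabilityMeasure.ennreal_coeFn_eq_coeFn_toMeasure,
      ← ProbabilityMeasure.ennreal_coeFn_eq_coeFn_toMeasure, ENNReal.coe_le_coe,
      ← NNReal.coe_le_coe]
    refine le_of_tendsto_of_tendsto' (hC _ hB) (hC _ hA) fun N => ?_
    rw [empirical_apply g x N hA, empirical_apply g x N hB]
    refine div_le_div_of_nonneg_right ?_ (Nat.cast_add_one_pos N).le
    have hN := h N
    rw [birkhoffSum, Finset.sum_sub_distrib, sub_nonpos] at hN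
    have cast : ∀ (C : Set X) y, C.indicator (fun _ => (1 : ℝ)) y =
        ((C.indicator (fun _ => (1 : ℤ)) y : ℤ) : ℝ) := fun C y => by
      by_cases hy : y ∈ C <;> simp [hy]
    simp only [cast]
    exact_mod_cast hN

end Measures

/-! ### Comparison of clopen sets and back-and-forth -/

section Comparison

variable {X : Type*} [TopologicalSpace X] [MeasurableSpace X] [BorelSpace X]
  [CompactSpace X] [TopologicalSpace.MetrizableSpace X] [TotallyDisconnectedSpace X]
  {g : X ≃ₜ X}

/-- Comparison lemma: if `A` is smaller than `B` for every invariant measure, then `A` is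
equidecomposable with a clopen subset of `B`. Along each orbit, the points of `A` are read as
opening and the points of `B` as closing parentheses, and each `x ∈ A` is sent to the matching
parenthesis, that is to `g ^ m x` where `m + 1` is the first positive time at which the excess
`#B - #A` of visits vanishes. -/
lemma exists_equidec_subset {A B : Set X} (hA : IsClopen A) (hB : IsClopen B)
    (h : ∀ μ : ProbabilityMeasure X, Preserves g μ →
      (μ : Measure X).real A < (μ : Measure X).real B) :
    ∃ C ⊆ B, IsClopen C ∧ Equidec g A C := by
  classical
  set c : X → ℤ := fun y => B.indicator (fun _ => (1 : ℤ)) y - A.indicator (fun _ => (1 : ℤ)) y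
    with hc
  have hcc : Continuous c :=
    (hB.continuous_indicator continuous_const).sub (hA.continuous_indicator continuous_const)
  have hSc : ∀ n, Continuous (birkhoffSum g c n) := fun n =>
    continuous_finsetSum _ fun i _ => hcc.comp (g.continuous.iterate i)
  have hc_le : ∀ y, c y ≤ 1 := fun y => by
    by_cases h1 : y ∈ A <;> by_cases h2 : y ∈ B <;> simp [hc, h1, h2]
  have hc_A : ∀ y ∈ A, c y ≤ 0 := fun y h1 => by
    by_cases h2 : y ∈ B <;> simp [hc, h1, h2]
  have hc_AB : ∀ y ∈ A, c y = 0 → y ∈ B := fun y h1 h0 => by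
    by_contra h2; simp [hc, h1, h2] at h0
  have hc_B : ∀ y, 0 < c y → y ∈ B := fun y h0 => by
    by_contra h2
    by_cases h1 : y ∈ A <;> simp [hc, h1, h2] at h0
  have hex : ∀ x, ∃ n, 0 ≤ birkhoffSum g c (n + 1) x := by
    intro x
    by_contra! hcon
    obtain ⟨μ, hμ, hle⟩ := exists_invariant_le x hA hB fun N => (hcon N).le
    have := h μ hμ
    exact absurd (ENNReal.toReal_mono (measure_ne_top _ _) hle) (not_le.2 this)
  set R : ℕ → Set X := fun m => {x | x ∈ A ∧ birkhoffSum g c (m + 1) x = 0 ∧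
    ∀ j < m, birkhoffSum g c (j + 1) x < 0} with hR
  have hRo : ∀ m, IsOpen (R m) := by
    intro m
    have : R m = A ∩ (birkhoffSum g c (m + 1) ⁻¹' {0} ∩
        ⋂ j ∈ Finset.range m, birkhoffSum g c (j + 1) ⁻¹' Iio 0) := by
      ext x; simp [hR]; tauto
    rw [this]
    exact hA.isOpen.inter (((isOpen_discrete _).preimage (hSc _)).inter
      (isOpen_biInter_finset fun j _ => (isOpen_discrete _).preimage (hSc _)))
  have hRA : ∀ x ∈ A, ∃ m, x ∈ R m := by
    intro x hx
    have hlt : ∀ j < Nat.find (hex x), birkhoffSum g c (j + 1) x < 0 := fun j hj =>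
      not_le.1 (Nat.find_min (hex x) hj)
    refine ⟨Nat.find (hex x), hx, le_antisymm ?_ (Nat.find_spec (hex x)), hlt⟩
    rcases hm : Nat.find (hex x) with _ | n
    · simpa [birkhoffSum_one] using hc_A x hx
    · have h1 := hlt n (by omega)
      have h2 := hc_le (g^[n + 1] x)
      rw [birkhoffSum_succ]
      omega
  have hRB : ∀ m, ∀ x ∈ R m, g^[m] x ∈ B := by
    rintro m x ⟨hx, h0, hlt⟩
    rcases m with _ | n
    · exact hc_AB x hx (by simpa [birkhoffSum_one] using h0)
    · have h1 := hlt n (by omega)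
      rw [birkhoffSum_succ] at h0
      exact hc_B _ (by omega)
  -- If `x` and a later point `g ^ j x` had the same match, the excess would already vanish
  -- at time `j`.
  have hinj : ∀ m m' x x', x ∈ R m → x' ∈ R m' → g^[m] x = g^[m'] x' → ¬ m' < m := by
    rintro m m' x x' ⟨hx, h0, hlt⟩ ⟨hx', h0', -⟩ heq hmm
    obtain ⟨j, rfl⟩ := Nat.exists_eq_add_of_lt hmm
    have hx'x : x' = g^[j + 1] x := by
      apply g.injective.iterate m'
      rw [← heq, ← Function.iterate_add_apply]
      congr 1
    have hsum := birkhoffSum_add g c (j + 1) (m' + 1) x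
    rw [← hx'x, h0', show j + 1 + (m' + 1) = m' + j + 1 + 1 by ring, h0] at hsum
    have := hlt j (by omega)
    omega
  set P : ℤ → Set X := fun k => ⋃ (m : ℕ) (_ : k = m), R m
  have hmem : ∀ k x, x ∈ P k ↔ ∃ m : ℕ, k = m ∧ x ∈ R m := fun k x => by simp [P]
  set C : Set X := {y | ∃ k, ∃ x ∈ P k, (g ^ k) x = y} with hC
  have hdec : IsDecomp g A C P := by
    refine ⟨fun k => isOpen_iUnion fun m => isOpen_iUnion fun _ => hRo m, ?_, ?_, ?_,
      fun y => Iff.rfl⟩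
    · intro k l x hk hl
      obtain ⟨m, rfl, -, h0, hm⟩ := (hmem _ _).1 hk
      obtain ⟨m', rfl, -, h0', hm'⟩ := (hmem _ _).1 hl
      rcases lt_trichotomy m m' with hlt | rfl | hlt
      · exact absurd h0 (hm' m hlt).ne
      · rfl
      · exact absurd h0' (hm m' hlt).ne
    · intro x
      constructor
      · intro hx
        obtain ⟨m, hm⟩ := hRA x hx
        exact ⟨m, (hmem _ _).2 ⟨m, rfl, hm⟩⟩
      · rintro ⟨k, hk⟩
        obtain ⟨m, -, hx, -⟩ := (hmem _ _).1 hk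
        exact hx
    · intro k l x y hx hy hxy
      obtain ⟨m, rfl, hm⟩ := (hmem _ _).1 hx
      obtain ⟨m', rfl, hm'⟩ := (hmem _ _).1 hy
      rw [zpow_natCast_apply, zpow_natCast_apply] at hxy
      have h1 := hinj _ _ _ _ hm hm' hxy
      have h2 := hinj _ _ _ _ hm' hm hxy.symm
      omega
  refine ⟨C, ?_, Equidec.isClopen ⟨P, hdec⟩ hA.isClosed.isCompact, P, hdec⟩
  rintro y ⟨k, x, hx, rfl⟩
  obtain ⟨m, rfl, hm⟩ := (hmem _ _).1 hx
  rw [zpow_natCast_apply]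
  exact hRB m x hm

variable [PerfectSpace X]

/-- One half of a back-and-forth step: all of `A` except a small clopen neighbourhood `A'` of
`p` is moved into `B`, avoiding a neighbourhood of `p`. -/
lemma half_step (hg : IsMinimal g) {A B U : Set X} {p : X} (hA : IsClopen A) (hB : IsClopen B)
    (hpA : p ∈ A) (hpB : p ∈ B) (hAB : SameMeasure g A B) (hU : IsOpen U) (hpU : p ∈ U) :
    ∃ A' ⊆ A, ∃ B' ⊆ B, IsClopen A' ∧ IsClopen B' ∧ p ∈ A' ∧ p ∈ B' ∧ A' ⊆ U ∧
      SameMeasure g A' B' ∧ Equidec g (A \ A') (B \ B') := by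
  obtain ⟨A', hA', hpA', hsub⟩ := compact_exists_isClopen_in_isOpen
    ((hA.isOpen.inter hB.isOpen).inter hU) ⟨⟨hpA, hpB⟩, hpU⟩
  obtain ⟨q, hqA', hqp⟩ : ∃ q ∈ A', q ≠ p := by
    have : A' ∩ {p}ᶜ ∈ 𝓝[≠] p :=
      inter_mem (mem_nhdsWithin_of_mem_nhds (hA'.isOpen.mem_nhds hpA')) self_mem_nhdsWithin
    obtain ⟨q, hq⟩ := Filter.nonempty_of_mem this
    exact ⟨q, hq.1, hq.2⟩
  -- `D` is a proper clopen subset of `A'`, hence strictly smaller for all invariant measures.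
  obtain ⟨D, hD, hpD, hDsub⟩ := compact_exists_isClopen_in_isOpen
    (hA'.isOpen.inter isOpen_ne) (⟨hpA', hqp.symm⟩ : p ∈ A' ∩ {y | y ≠ q})
  have hDA' : D ⊆ A' := fun x hx => (hDsub hx).1
  have hA'A : A' ⊆ A := fun x hx => (hsub hx).1.1
  have hA'B : A' ⊆ B := fun x hx => (hsub hx).1.2
  obtain ⟨C, hCsub, hC, hdec⟩ := exists_equidec_subset (g := g) (hA.diff hA')
    (hB.diff hD) (by
      intro μ hμ
      have hpos : 0 < (μ : Measure X).real (A' \ D) :=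
        ENNReal.toReal_pos (measure_pos hg hμ (hA'.diff hD).isOpen
          ⟨q, hqA', fun hq => (hDsub hq).2 rfl⟩).ne' (measure_ne_top _ _)
      have hAB := hAB μ hμ
      rw [measureReal_sdiff hDA' hD.isOpen.measurableSet] at hpos
      rw [measureReal_sdiff hA'A hA'.isOpen.measurableSet,
        measureReal_sdiff (hDA'.trans hA'B) hD.isOpen.measurableSet]
      linarith)
  have hCB : C ⊆ B := fun x hx => (hCsub hx).1
  refine ⟨A', hA'A, B \ C, sdiff_subset, hA', hB.diff hC, hpA',
    ⟨hpB, fun hp => (hCsub hp).2 hpD⟩, fun x hx => (hsub hx).2, ?_, ?_⟩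
  · intro μ hμ
    have h1 : (μ : Measure X).real (A \ A') = (μ : Measure X).real C :=
      congrArg ENNReal.toReal (hdec.measure_eq hμ)
    rw [measureReal_sdiff hA'A hA'.isOpen.measurableSet] at h1
    rw [measureReal_sdiff hCB hC.isOpen.measurableSet]
    have hAB := hAB μ hμ
    linarith
  · rwa [sdiff_sdiff_cancel_left hCB]

/-- A back-and-forth step: two half steps with the roles of `A` and `B` exchanged, so that both
remainders lie in the prescribed neighbourhood `U` of `p`. -/
lemma full_step (hg : IsMinimal g) {A B U : Set X} {p : X} (hA : IsClopen A) (hB : IsClopen B)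
    (hpA : p ∈ A) (hpB : p ∈ B) (hAB : SameMeasure g A B) (hU : IsOpen U) (hpU : p ∈ U) :
    ∃ A' ⊆ A, ∃ B' ⊆ B, IsClopen A' ∧ IsClopen B' ∧ p ∈ A' ∧ p ∈ B' ∧ A' ⊆ U ∧ B' ⊆ U ∧
      SameMeasure g A' B' ∧ Equidec g (A \ A') (B \ B') := by
  obtain ⟨A₁, hA₁A, B₁, hB₁B, hA₁, hB₁, hpA₁, hpB₁, hA₁U, hm₁, he₁⟩ :=
    half_step hg hA hB hpA hpB hAB hU hpU
  obtain ⟨B₂, hB₂B, A₂, hA₂A, hB₂, hA₂, hpB₂, hpA₂, hB₂U, hm₂, he₂⟩ :=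
    half_step hg hB₁ hA₁ hpB₁ hpA₁ (fun μ hμ => (hm₁ μ hμ).symm) hU hpU
  refine ⟨A₂, hA₂A.trans hA₁A, B₂, hB₂B.trans hB₁B, hA₂, hB₂, hpA₂, hpB₂, hA₂A.trans hA₁U, hB₂U,
    fun μ hμ => (hm₂ μ hμ).symm, ?_⟩
  have h := he₁.union he₂.symm (disjoint_sdiff_left.mono_right sdiff_subset)
    (disjoint_sdiff_left.mono_right sdiff_subset)
  rwa [sdiff_union_sdiff_cancel hA₁A hA₂A, sdiff_union_sdiff_cancel hB₁B hB₂B] at h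

/-- Iterating the back-and-forth step with neighbourhoods shrinking to `p` exhausts both sets
except for `p`. -/
lemma equidec_sdiff_singleton (hg : IsMinimal g) {A B : Set X} {p : X} (hA : IsClopen A)
    (hB : IsClopen B) (hpA : p ∈ A) (hpB : p ∈ B) (hAB : SameMeasure g A B) :
    Equidec g (A \ {p}) (B \ {p}) := by
  let _ := TopologicalSpace.metrizableSpaceMetric X
  let State := {S : Set X × Set X //
    IsClopen S.1 ∧ IsClopen S.2 ∧ p ∈ S.1 ∧ p ∈ S.2 ∧ SameMeasure g S.1 S.2}
  have hstep : ∀ (n : ℕ) (S : State), ∃ T : State, T.1.1 ⊆ S.1.1 ∧ T.1.2 ⊆ S.1.2 ∧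
      T.1.1 ⊆ Metric.ball p (1 / (n + 1)) ∧ T.1.2 ⊆ Metric.ball p (1 / (n + 1)) ∧
      Equidec g (S.1.1 \ T.1.1) (S.1.2 \ T.1.2) := by
    rintro n ⟨⟨S₁, S₂⟩, h1, h2, h3, h4, h5⟩
    obtain ⟨A', hA'A, B', hB'B, hA', hB', hpA', hpB', hA'U, hB'U, hm, he⟩ :=
      full_step hg h1 h2 h3 h4 h5 (Metric.isOpen_ball (x := p) (ε := 1 / ((n : ℝ) + 1)))
        (Metric.mem_ball_self (by positivity))
    exact ⟨⟨⟨A', B'⟩, hA', hB', hpA', hpB', hm⟩, hA'A, hB'B, hA'U, hB'U, he⟩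
  choose next hn1 hn2 hn3 hn4 hn5 using hstep
  let s : ℕ → State := fun n => Nat.rec ⟨⟨A, B⟩, hA, hB, hpA, hpB, hAB⟩ (fun n S => next n S) n
  have hs : ∀ n, s (n + 1) = next n (s n) := fun n => rfl
  have hball : ∀ T : ℕ → Set X, (∀ n, T (n + 1) ⊆ Metric.ball p (1 / (n + 1))) →
      ∀ x, (∀ n, x ∈ T n) → x = p := by
    intro T hT x hx
    refine dist_le_zero.1 (ge_of_tendsto' tendsto_one_div_add_atTop_nhds_zero_nat fun n => ?_)
    exact (Metric.mem_ball.1 (hT n (hx (n + 1)))).le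
  have ha1 : Antitone fun n => (s n).1.1 := antitone_nat_of_succ_le fun n => hn1 n (s n)
  have ha2 : Antitone fun n => (s n).1.2 := antitone_nat_of_succ_le fun n => hn2 n (s n)
  have e1 := sdiff_singleton_eq_iUnion ha1 (fun n => (s n).2.2.2.1)
    (hball _ fun n => hn3 n (s n))
  have e2 := sdiff_singleton_eq_iUnion ha2 (fun n => (s n).2.2.2.2.1)
    (hball _ fun n => hn4 n (s n))
  change A \ {p} = _ at e1
  change B \ {p} = _ at e2
  rw [e1, e2]
  exact Equidec.iUnion (fun n => hn5 n (s n)) (eq_of_mem_sdiff ha1) (eq_of_mem_sdiff ha2)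

/-- Clopen sets with the same measure for all invariant measures are mapped onto each other
inside the `g`-orbits. Translating `B` by a power of `g` reduces to the case where `A` and `B`
have a common point. -/
lemma exists_bijOn (hg : IsMinimal g) {A B : Set X} (hA : IsClopen A) (hB : IsClopen B)
    (hAB : SameMeasure g A B) (hAne : A.Nonempty) (hBne : B.Nonempty) :
    ∃ f : X → X, BijOn f A B ∧ ContinuousOn f A ∧ ∀ x ∈ A, ∃ n : ℤ, f x = (g ^ n) x := by
  obtain ⟨p, hpA⟩ := hAne
  obtain ⟨_, hpB, m, rfl⟩ := (hg p).inter_open_nonempty B hB.isOpen hBne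
  simp only [← zpow_apply_eq] at hpB
  set B₀ : Set X := ⇑(g ^ m) ⁻¹' B
  have hB₀ : IsClopen B₀ := hB.preimage (g ^ m).continuous
  have hm : SameMeasure g A B₀ := by
    intro μ hμ
    rw [hAB μ hμ]
    have : ⇑(g ^ m) '' B₀ = B := image_preimage_eq _ (g ^ m).surjective
    conv_lhs => rw [← this]
    exact congrArg ENNReal.toReal (measure_zpow_image hμ m B₀)
  obtain ⟨f, hf, hc, hn⟩ := (equidec_sdiff_singleton hg hA hB₀ hpA hpB
    hm).exists_bijOn_of_sdiff_singleton hB₀.isClosed hpA hpB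
  refine ⟨⇑(g ^ m) ∘ f, BijOn.comp ?_ hf, (g ^ m).continuous.comp_continuousOn hc, ?_⟩
  · exact ⟨fun x hx => hx, (g ^ m).injective.injOn, fun y hy => by
      obtain ⟨x, rfl⟩ := (g ^ m).surjective y
      exact ⟨x, hy, rfl⟩⟩
  · intro x hx
    obtain ⟨n, hn⟩ := hn x hx
    exact ⟨m + n, by rw [Function.comp_apply, hn, zpow_add, Homeomorph.mul_apply]⟩

end Comparison

/-! ### The closure of the full group -/

universe u

section Closure

variable {X : Type*} [TopologicalSpace X] [CompactSpace X] [TotallyDisconnectedSpace X]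

/-- A partition of a compact totally disconnected metric space into clopen sets of small
diameter, presented as the fibres of a continuous map to a discrete space. -/
lemma exists_small_partition {X : Type u} [MetricSpace X] [CompactSpace X]
    [TotallyDisconnectedSpace X] {ε : ℝ} (hε : 0 < ε) :
    ∃ (ι : Type u) (q : X → ι), (∀ s, IsClopen (q ⁻¹' {s})) ∧
      ∀ x y, q x = q y → dist x y < ε := by
  classical
  have h : ∀ x : X, ∃ V : Set X, IsClopen V ∧ x ∈ V ∧ V ⊆ Metric.ball x (ε / 2) := fun x =>
    compact_exists_isClopen_in_isOpen Metric.isOpen_ball (Metric.mem_ball_self (by positivity))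
  choose V hV hxV hVb using h
  obtain ⟨t, ht⟩ := isCompact_univ.elim_finite_subcover V (fun x => (hV x).isOpen)
    fun x _ => mem_iUnion.2 ⟨x, hxV x⟩
  refine ⟨t → Bool, fun x i => (V i).boolIndicator x, fun s => ?_, fun x y hxy => ?_⟩
  · refine (isClopen_discrete {s}).preimage ?_
    exact continuous_pi fun i => (continuous_boolIndicator_iff_isClopen _).2 (hV i)
  · obtain ⟨z, hz, hxz⟩ := mem_iUnion₂.1 (ht (mem_univ x))
    have h1 : (V z).boolIndicator x = (V z).boolIndicator y := congrFun hxy ⟨z, hz⟩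
    have hyz : y ∈ V z := by
      rw [mem_iff_boolIndicator] at hxz ⊢
      exact h1 ▸ hxz
    have h2 := Metric.mem_ball.1 (hVb z hxz)
    have h3 := Metric.mem_ball'.1 (hVb z hyz)
    linarith [dist_triangle x z y]

variable [TopologicalSpace.MetrizableSpace X] [MeasurableSpace X] [BorelSpace X] {g : X ≃ₜ X}

lemma preserves_of_mem_closure {h : X ≃ₜ X} (hh : h ∈ closure {h : X ≃ₜ X | InFullGroup g h})
    {μ : ProbabilityMeasure X} (hμ : Preserves g μ) : Preserves h μ := by
  have : IsProbabilityMeasure (Measure.map h (μ : Measure X)) :=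
    Measure.isProbabilityMeasure_map h.continuous.measurable.aemeasurable
  refine measure_ext_clopen fun C hC => ?_
  rw [Measure.map_apply h.continuous.measurable hC.isOpen.measurableSet]
  rw [closure_induced, mem_closure_iff] at hh
  have hpre : IsClopen (h ⁻¹' C) := hC.preimage h.continuous
  -- Near `h`, a homeomorphism has the same preimage of the clopen set `C` as `h`.
  obtain ⟨_, ⟨h1, h2⟩, f, hf, rfl⟩ := hh
    ({f : C(X, X) | MapsTo f (h ⁻¹' C) C} ∩ {f : C(X, X) | MapsTo f (h ⁻¹' C)ᶜ Cᶜ})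
    ((ContinuousMap.isOpen_setOfPred_mapsTo hpre.isClosed.isCompact hC.isOpen).inter
      (ContinuousMap.isOpen_setOfPred_mapsTo hpre.compl.isClosed.isCompact hC.compl.isOpen))
    ⟨fun x hx => hx, fun x hx => hx⟩
  have heq : h ⁻¹' C = f ⁻¹' C := by
    ext x
    constructor
    · intro hx; exact h1 hx
    · intro hx
      by_contra hcon
      exact h2 hcon hx
  rw [heq]
  exact measure_preimage_of_inFullGroup hf hμ hC.isOpen.measurableSet

variable [PerfectSpace X]

/-- Given a partition into small clopen sets `q ⁻¹' {s}`, each preimage `h ⁻¹' (q ⁻¹' {s})` is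
mapped onto `q ⁻¹' {s}` inside the orbits of `g`; gluing these maps gives an element of the full
group uniformly close to `h`. -/
lemma mem_closure_of_preserves (hg : IsMinimal g) {h : X ≃ₜ X}
    (hh : ∀ μ : ProbabilityMeasure X, Preserves g μ → Preserves h μ) :
    h ∈ closure {h : X ≃ₜ X | InFullGroup g h} := by
  let _ := TopologicalSpace.metrizableSpaceMetric X
  rw [closure_induced, Metric.mem_closure_iff]
  intro ε hε
  obtain ⟨ι, q, hq, hqd⟩ := exists_small_partition (X := X) (half_pos hε)
  have hex : ∀ s : ι, ∃ F : X → X, BijOn F (h ⁻¹' (q ⁻¹' {s})) (q ⁻¹' {s}) ∧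
      ContinuousOn F (h ⁻¹' (q ⁻¹' {s})) ∧
      ∀ x ∈ h ⁻¹' (q ⁻¹' {s}), ∃ n : ℤ, F x = (g ^ n) x := by
    intro s
    rcases (q ⁻¹' {s}).eq_empty_or_nonempty with he | hne
    · rw [he, preimage_empty]
      exact ⟨id, bijOn_empty _, continuousOn_empty _, fun x hx => hx.elim⟩
    · refine exists_bijOn hg ((hq s).preimage h.continuous) (hq s) (fun μ hμ => ?_)
        (hne.preimage h.surjective) hne
      have hm : Measure.map h (μ : Measure X) = μ := hh μ hμ
      conv_rhs => rw [← hm]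
      rw [measureReal_def, measureReal_def,
        Measure.map_apply h.continuous.measurable (hq s).isOpen.measurableSet]
  choose F hF hFc hFn using hex
  let f : X → X := fun x => F (q (h x)) x
  have hqf : ∀ x, q (f x) = q (h x) := fun x => (hF (q (h x))).mapsTo (rfl : q (h x) = _)
  have hfc : Continuous f := by
    refine continuous_iff_continuousAt.2 fun x => ?_
    have hnhds : h ⁻¹' (q ⁻¹' {q (h x)}) ∈ 𝓝 x :=
      ((hq _).preimage h.continuous).isOpen.mem_nhds rfl
    refine ((hFc (q (h x))).continuousAt hnhds).congr ?_
    filter_upwards [hnhds] with y hy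
    have hy' : q (h y) = q (h x) := hy
    simp only [f, hy']
  have hfb : Function.Bijective f := by
    constructor
    · intro x y hxy
      have hs : q (h x) = q (h y) := by rw [← hqf, ← hqf, hxy]
      refine (hF (q (h y))).injOn hs rfl ?_
      simpa only [f, hs] using hxy
    · intro y
      obtain ⟨x, hx, hxy⟩ := (hF (q y)).surjOn (rfl : q y = q y)
      have hx' : q (h x) = q y := hx
      exact ⟨x, by simpa only [f, hx'] using hxy⟩
  let f' : X ≃ₜ X := Continuous.homeoOfEquivCompactToT2 (f := Equiv.ofBijective f hfb) hfc
  refine ⟨_, ⟨f', fun x => ?_, rfl⟩, ?_⟩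
  · obtain ⟨n, hn⟩ := hFn (q (h x)) x rfl
    exact ⟨n, by rw [← zpow_apply_eq]; exact hn⟩
  · refine lt_of_le_of_lt ((ContinuousMap.dist_le (half_pos hε).le).2 fun x => ?_)
      (half_lt_self hε)
    exact (hqd (h x) (f x) (hqf x).symm).le

end Closure

end FullGroupClosure

theorem closure_fullGroup_eq_invariant_preserving
    {X : Type*} [TopologicalSpace X] [CompactSpace X]
    [TopologicalSpace.MetrizableSpace X] [TotallyDisconnectedSpace X] [PerfectSpace X]
    [Nonempty X] [MeasurableSpace X] [BorelSpace X]
    (g : X ≃ₜ X) (hg : DynSimplex.IsMinimal g) :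
    closure {h : X ≃ₜ X | DynSimplex.InFullGroup g h} =
      {h : X ≃ₜ X | ∀ μ : MeasureTheory.ProbabilityMeasure X,
        DynSimplex.Preserves g μ → DynSimplex.Preserves h μ} :=
  Set.Subset.antisymm (fun _ hh _ hμ => FullGroupClosure.preserves_of_mem_closure hh hμ)
    (fun _ hh => FullGroupClosure.mem_closure_of_preserves hg hh)
end

section
/- Let X be a Cantor space and K a compact convex subset of Prob(X) with finitely many extreme points, such that every μ ∈ K is atomless and has full support. Then K is approximately divisible. -/
/-!
Each inequality `μ A - ε ≤ n * μ B ≤ μ A` is a closed convex condition on `μ`, so by Krein–Milman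
it is enough to find one clopen `B ⊆ A` that satisfies it for the finitely many extreme points
`μ_1, …, μ_d` of `K`. To apply Krein–Milman, `K` is embedded in the locally convex space
`Clopens X → ℝ` by recording the measures of the clopen sets (`clopenValues`). This map is
continuous because clopen sets have empty frontier, it is compatible with convex combinations, and
it is injective because the clopen sets form a π-system generating the Borel σ-algebra; hence
extreme points of the image come from extreme points of `K`.

For finitely many atomless measures, `A` is partitioned into finitely many clopen sets `A_j`, each
of `μ_i`-measure at most `δ` for all `i`. The vectors `v_j = (μ_i A_j)_i` lie in `ℝ^d`, and the
polytope of all `y ∈ [0,1]^N` with `∑ y_j v_j = (1/n) ∑ v_j` contains the constant point `1/n`. An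
extreme point `y` of it has at most `d` coordinates strictly between `0` and `1`
(`exists_few_fractional`), since more of them would allow a move along a linear relation among the
corresponding `v_j`, in both directions. Let `B` be the union of the `A_j` with `y_j = 1`. Rounding
the fractional coordinates down to `0` only decreases the sum, by at most `d δ` in each coordinate,
so `μ_i A / n - d δ ≤ μ_i B ≤ μ_i A / n`.
-/

open MeasureTheory

namespace DynSimplex

open Set Filter Topology TopologicalSpace

/-- A point of the cube `[0,1]^N` can be replaced, without changing the weighted sum of the
vectors `v j`, by one with at most `card ι` fractional coordinates. -/
lemma exists_few_fractional {ι κ : Type*} [Fintype ι] [Fintype κ] (v : κ → ι → ℝ) (x : κ → ℝ)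
    (hx : ∀ j, x j ∈ Icc (0 : ℝ) 1) :
    ∃ y : κ → ℝ, (∀ j, y j ∈ Icc (0 : ℝ) 1) ∧ ∑ j, y j • v j = ∑ j, x j • v j ∧
      Fintype.card {j // y j ≠ 0 ∧ y j ≠ 1} ≤ Fintype.card ι := by
  classical
  let P : Set (κ → ℝ) := {y | y ∈ Set.univ.pi (fun _ => Icc (0 : ℝ) 1) ∧
    ∑ j, y j • v j = ∑ j, x j • v j}
  have hcont : Continuous fun y : κ → ℝ => ∑ j, y j • v j := by fun_prop
  have hP : IsCompact P :=
    (isCompact_univ_pi fun _ => isCompact_Icc).inter_right (isClosed_eq hcont continuous_const)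
  obtain ⟨y, ⟨hyP, hyext⟩⟩ := hP.extremePoints_nonempty ⟨x, fun j _ => hx j, rfl⟩
  have hy : ∀ j, y j ∈ Icc (0 : ℝ) 1 := fun j => hyP.1 j (mem_univ j)
  refine ⟨y, hy, hyP.2, ?_⟩
  by_contra hcard
  have hdep : ¬ LinearIndependent ℝ (fun j : {j // y j ≠ 0 ∧ y j ≠ 1} => v j) := by
    intro h
    apply hcard
    simpa using h.fintype_card_le_finrank
  obtain ⟨g, hg, j₀, hj₀⟩ := Fintype.not_linearIndependent_iff.1 hdep
  let c : κ → ℝ := fun j => if h : y j ≠ 0 ∧ y j ≠ 1 then g ⟨j, h⟩ else 0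
  have hc0 : ∀ j, ¬ (y j ≠ 0 ∧ y j ≠ 1) → c j = 0 := fun j h => dif_neg h
  have hcg : ∀ j : {j // y j ≠ 0 ∧ y j ≠ 1}, c j = g j := fun j => dif_pos j.2
  have hcsum : ∑ j, c j • v j = 0 := by
    rw [← hg, ← Fintype.sum_subtype_add_sum_subtype (fun j => y j ≠ 0 ∧ y j ≠ 1),
      Finset.sum_eq_zero (s := (Finset.univ : Finset {j // ¬ (y j ≠ 0 ∧ y j ≠ 1)}))
        (fun j _ => by rw [hc0 j j.2, zero_smul]), add_zero]
    exact Finset.sum_congr rfl fun j _ => by rw [hcg]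
  have hev : ∀ᶠ t : ℝ in 𝓝[>] 0, ∀ j, y j + t * c j ∈ Icc (0 : ℝ) 1 ∧
      y j + (-t) * c j ∈ Icc (0 : ℝ) 1 := by
    refine nhdsWithin_le_nhds (eventually_all.2 fun j => ?_)
    by_cases h : y j ≠ 0 ∧ y j ≠ 1
    · have hmem : Icc (0 : ℝ) 1 ∈ 𝓝 (y j) :=
        Icc_mem_nhds (lt_of_le_of_ne (hy j).1 h.1.symm) (lt_of_le_of_ne (hy j).2 h.2)
      have h1 : Tendsto (fun t : ℝ => y j + t * c j) (𝓝 0) (𝓝 (y j)) :=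
        Continuous.tendsto' (by fun_prop) _ _ (by simp)
      have h2 : Tendsto (fun t : ℝ => y j + (-t) * c j) (𝓝 0) (𝓝 (y j)) :=
        Continuous.tendsto' (by fun_prop) _ _ (by simp)
      exact (h1.eventually_mem hmem).and (h2.eventually_mem hmem)
    · simp only [hc0 j h, mul_zero, add_zero, and_self]
      exact Eventually.of_forall fun _ => hy j
  obtain ⟨t, htI, ht⟩ := (hev.and self_mem_nhdsWithin).exists
  have hsum : ∀ s : ℝ, ∑ j, (y j + s * c j) • v j = ∑ j, x j • v j := by
    intro s
    have : ∑ j, (y j + s * c j) • v j = ∑ j, y j • v j + s • ∑ j, c j • v j := by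
      simp only [add_smul, mul_smul, Finset.sum_add_distrib, Finset.smul_sum]
    rw [this, hcsum, smul_zero, add_zero]
    exact hyP.2
  have key := hyext (x₁ := fun j => y j + t * c j) ⟨fun j _ => (htI j).1, hsum t⟩
    (x₂ := fun j => y j + (-t) * c j) ⟨fun j _ => (htI j).2, hsum (-t)⟩
    ⟨1 / 2, 1 / 2, by norm_num, by norm_num, by norm_num, by
      ext j; simp only [Pi.add_apply, Pi.smul_apply, smul_eq_mul]; ring⟩
  have hk := congrFun key j₀
  have : t * c j₀ = 0 := by simpa using hk
  rcases mul_eq_zero.1 this with h | h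
  · exact (ne_of_gt ht) h
  · exact hj₀ (by rw [← hcg, h])

/-- Rounding: from finitely many nonnegative vectors with entries at most `δ`, a subfamily can be
selected whose sum is below `1/n` of the total, coordinatewise, by at most `card ι * δ`. -/
lemma exists_subfamily {ι κ : Type*} [Fintype ι] [Fintype κ] (v : κ → ι → ℝ) {δ : ℝ}
    (hδ : 0 ≤ δ) (hv0 : ∀ j i, 0 ≤ v j i) (hvδ : ∀ j i, v j i ≤ δ) (n : ℕ) (hn : 1 ≤ n) :
    ∃ S : Finset κ, ∀ i, ∑ j ∈ S, v j i ≤ (∑ j, v j i) / n ∧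
      (∑ j, v j i) / n - Fintype.card ι * δ ≤ ∑ j ∈ S, v j i := by
  classical
  have hn' : (1 : ℝ) ≤ n := by exact_mod_cast hn
  obtain ⟨y, hy, hsum, hcard⟩ := exists_few_fractional v (fun _ => (1 / n : ℝ))
    (fun _ => ⟨by positivity, by rw [div_le_one (by linarith)]; exact hn'⟩)
  let F : Finset κ := {j | y j ≠ 0 ∧ y j ≠ 1}
  refine ⟨({j | y j = 1} : Finset κ), fun i => ?_⟩
  have hs : ∑ j, y j * v j i = (∑ j, v j i) / n := by
    have := congrFun hsum i
    simp only [Finset.sum_apply, Pi.smul_apply, smul_eq_mul] at this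
    rw [this, ← Finset.mul_sum]; ring
  rw [← hs]
  have hFc : (F.card : ℝ) ≤ Fintype.card ι := by
    rw [Fintype.card_subtype] at hcard
    exact_mod_cast hcard
  rw [Finset.sum_filter]
  constructor
  · refine Finset.sum_le_sum fun j _ => ?_
    split_ifs with h
    · rw [h, one_mul]
    · exact mul_nonneg (hy j).1 (hv0 j i)
  · have h1 : ∑ j, y j * v j i ≤ ∑ j, ((if y j = 1 then v j i else 0) +
        (if y j ≠ 0 ∧ y j ≠ 1 then δ else 0)) := by
      refine Finset.sum_le_sum fun j _ => ?_
      by_cases h : y j = 1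
      · simp [h]
      by_cases h₀ : y j = 0
      · simp [h₀]
      · simp only [h, h₀, if_false, ne_eq, not_false_eq_true, and_self, if_true, zero_add]
        exact (mul_le_of_le_one_left (hv0 j i) (hy j).2).trans (hvδ j i)
    have h2 : ∑ j, (if y j ≠ 0 ∧ y j ≠ 1 then δ else 0) = F.card * δ := by
      rw [← Finset.sum_filter, Finset.sum_const, nsmul_eq_mul]
    have h3 : (F.card : ℝ) * δ ≤ Fintype.card ι * δ := mul_le_mul_of_nonneg_right hFc hδ
    rw [Finset.sum_add_distrib, h2] at h1
    linarith

section Cantor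

variable {X : Type*} [TopologicalSpace X] [MeasurableSpace X]

/-- The map from measures to the locally convex space `Clopens X → ℝ` recording the measure
of every clopen set. -/
noncomputable def clopenValues (μ : FiniteMeasure X) : Clopens X → ℝ :=
  fun B => (μ (B : Set X) : ℝ)

lemma clopenValues_combo (a b : NNReal) (μ ν : FiniteMeasure X) :
    clopenValues (a • μ + b • ν) = (a : ℝ) • clopenValues μ + (b : ℝ) • clopenValues ν := by
  ext B
  simp [clopenValues, FiniteMeasure.coeFn_add, FiniteMeasure.coeFn_smul]

variable [BorelSpace X] [MetrizableSpace X]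

lemma continuous_clopenValues :
    Continuous fun μ : ProbabilityMeasure X => clopenValues μ.toFiniteMeasure := by
  refine continuous_pi fun B => NNReal.continuous_coe.comp ?_
  refine continuous_iff_continuousAt.2 fun μ => ?_
  exact ProbabilityMeasure.tendsto_measure_of_isClopen_of_tendsto tendsto_id B.isClopen

variable [CompactSpace X] [TotallyDisconnectedSpace X]

/-- Finitely many atomless measures admit a finite clopen partition of `X` into sets that are
small for all of them. -/
lemma exists_small_partition {ι : Type*} [Finite ι] (μ : ι → ProbabilityMeasure X)
    (hμ : ∀ i, Atomless (μ i)) {δ : ℝ} (hδ : 0 < δ) :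
    ∃ (N : ℕ) (W : Fin N → Clopens X), (∀ j i, (μ i (W j : Set X) : ℝ) ≤ δ) ∧
      (Set.univ : Set X) ⊆ ⋃ j, (W j : Set X) ∧ Pairwise (Function.onFun Disjoint W) := by
  have hloc : ∀ x : X, ∃ U : Opens X, x ∈ U ∧ ∀ i, (μ i (U : Set X) : ℝ) ≤ δ := by
    intro x
    have : ∀ i, ∃ U : Set X, {x} ⊆ U ∧ IsOpen U ∧ (μ i : Measure X) U < ENNReal.ofReal δ := by
      intro i
      refine ({x} : Set X).exists_isOpen_lt_of_lt _ ?_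
      have h0 : (μ i : Measure X) {x} = 0 :=
        (ProbabilityMeasure.null_iff_toMeasure_null _ _).1 (hμ i x)
      rw [h0]
      simpa using hδ
    choose U hxU hUo hUlt using this
    refine ⟨⟨⋂ i, U i, isOpen_iInter_of_finite hUo⟩, ?_, fun i => ?_⟩
    · exact mem_iInter.2 fun i => hxU i rfl
    · have h1 : (μ i : Measure X) (⋂ i, U i) ≤ ENNReal.ofReal δ :=
        (measure_mono (iInter_subset U i)).trans (hUlt i).le
      rw [← ProbabilityMeasure.measureReal_eq_coe_coeFn]
      exact ENNReal.toReal_le_of_le_ofReal hδ.le h1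
  choose U hxU hU using hloc
  have hcover : IsOpenCover U := by
    rw [IsOpenCover, ← Opens.coe_eq_univ, Opens.coe_iSup]
    exact eq_univ_of_forall fun x => mem_iUnion.2 ⟨x, hxU x⟩
  obtain ⟨N, W, hW, hWun, hWd⟩ := hcover.exists_finite_nonempty_disjoint_clopen_cover
  refine ⟨N, W, fun j i => ?_, hWun, hWd⟩
  obtain ⟨x, hx⟩ := (hW j).2
  exact (NNReal.coe_le_coe.2 ((μ i).apply_mono hx)).trans (hU x i)

/-- Approximate divisibility for finitely many atomless measures. -/
lemma exists_approx_div {ι : Type*} [Fintype ι] (μ : ι → ProbabilityMeasure X)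
    (hμ : ∀ i, Atomless (μ i)) {A : Set X} (hA : IsClopen A) (n : ℕ) (hn : 1 ≤ n) {ε : ℝ}
    (hε : 0 < ε) :
    ∃ B : Set X, IsClopen B ∧ B ⊆ A ∧ ∀ i, (μ i A : ℝ) - ε ≤ (n : ℝ) * (μ i B : ℝ) ∧
      (n : ℝ) * (μ i B : ℝ) ≤ (μ i A : ℝ) := by
  have hn' : (0 : ℝ) < n := by exact_mod_cast hn
  -- chosen so that the total error `n * (card ι * δ)` is at most `ε`
  let δ : ℝ := ε / (n * (Fintype.card ι + 1))
  have hδ : 0 < δ := by positivity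
  have hδε : n * (Fintype.card ι * δ) ≤ ε := by
    have : (n : ℝ) * ((Fintype.card ι + 1) * δ) = ε := by simp only [δ]; field_simp
    nlinarith
  obtain ⟨N, W, hWδ, hWun, hWd⟩ := exists_small_partition μ hμ hδ
  let C : Fin N → Set X := fun j => A ∩ W j
  have hC : ∀ j, IsClopen (C j) := fun j => hA.inter (W j).isClopen
  have hCd : Pairwise (Function.onFun Disjoint C) := fun j k hjk =>
    (Clopens.coe_disjoint.2 (hWd hjk)).mono inter_subset_right inter_subset_right
  have hmeas : ∀ (i : ι) (S : Finset (Fin N)),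
      (μ i (⋃ j ∈ S, C j) : ℝ) = ∑ j ∈ S, (μ i (C j) : ℝ) := by
    intro i S
    simp only [← ProbabilityMeasure.measureReal_eq_coe_coeFn]
    exact measureReal_biUnion_finset (fun j _ k _ hjk => hCd hjk)
      (fun j _ => (hC j).isOpen.measurableSet)
  have hAun : A = ⋃ j ∈ (Finset.univ : Finset (Fin N)), C j := by
    simp only [Finset.mem_univ, iUnion_true, C, ← inter_iUnion]
    exact (inter_eq_left.2 ((subset_univ A).trans hWun)).symm
  obtain ⟨S, hS⟩ := exists_subfamily (fun j i => (μ i (C j) : ℝ)) hδ.le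
    (fun j i => NNReal.coe_nonneg _)
    (fun j i => (NNReal.coe_le_coe.2 ((μ i).apply_mono inter_subset_right)).trans (hWδ j i)) n hn
  refine ⟨⋃ j ∈ S, C j, isClopen_biUnion_finset fun j _ => hC j,
    iUnion₂_subset fun j _ => inter_subset_left, fun i => ?_⟩
  obtain ⟨h1, h2⟩ := hS i
  have hAi : (μ i A : ℝ) = ∑ j, (μ i (C j) : ℝ) := by
    rw [← hmeas i Finset.univ, ← hAun]
  rw [← hAi, ← hmeas] at h1 h2
  rw [le_div_iff₀ hn'] at h1
  rw [sub_le_iff_le_add, div_le_iff₀ hn'] at h2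
  constructor <;> linarith

lemma clopenValues_injective : Function.Injective (clopenValues (X := X)) := by
  intro μ ν h
  have hB : ∀ B : Set X, IsClopen B → (μ : Measure X) B = (ν : Measure X) B := by
    intro B hB
    have := congrFun h ⟨B, hB⟩
    rw [← FiniteMeasure.ennreal_coeFn_eq_coeFn_toMeasure,
      ← FiniteMeasure.ennreal_coeFn_eq_coeFn_toMeasure]
    exact congrArg _ (NNReal.coe_injective this)
  let _ := metrizableSpaceMetric X
  apply Subtype.ext
  change (μ : Measure X) = (ν : Measure X)
  refine ext_of_generate_finite {B : Set X | IsClopen B} ?_ ?_ (fun B => hB B)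
    (hB _ isClopen_univ)
  · rw [‹BorelSpace X›.measurable_eq]
    exact isTopologicalBasis_isClopen.borel_eq_generateFrom
  · exact fun s hs t ht _ => hs.inter ht

/-- Krein–Milman for `K`: a closed convex condition on the values at clopen sets holds on `K` as
soon as it holds at the extreme points of `K`. -/
lemma clopenValues_mem_of_extremePoints {K : Set (ProbabilityMeasure X)} (hK : IsCompact K)
    (hconv : ProbConvex K) {T : Set (Clopens X → ℝ)} (hTc : IsClosed T) (hT : Convex ℝ T)
    (hext : ∀ μ ∈ ProbExtremePoints K, clopenValues μ.toFiniteMeasure ∈ T) :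
    ∀ μ ∈ K, clopenValues μ.toFiniteMeasure ∈ T := by
  let L : Set (Clopens X → ℝ) := clopenValues '' (ProbabilityMeasure.toFiniteMeasure '' K)
  have hLK : IsCompact L := by
    simp only [L, image_image]
    exact hK.image continuous_clopenValues
  have hLc : Convex ℝ L := by
    rintro _ ⟨μ, hμ, rfl⟩ _ ⟨ν, hν, rfl⟩ a b ha hb hab
    lift a to NNReal using ha
    lift b to NNReal using hb
    exact ⟨a • μ + b • ν, hconv hμ hν zero_le zero_le (by exact_mod_cast hab),
      clopenValues_combo a b μ ν⟩
  have hLext : L.extremePoints ℝ ⊆ T := by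
    rintro _ ⟨⟨_, ⟨μ, hμ, rfl⟩, rfl⟩, hx⟩
    refine hext μ ⟨⟨μ, hμ, rfl⟩, ?_⟩
    rintro ν₁ hν₁ ν₂ hν₂ ⟨a, b, ha, hb, hab, h⟩
    refine clopenValues_injective (hx ⟨ν₁, hν₁, rfl⟩ ⟨ν₂, hν₂, rfl⟩
      ⟨a, b, ha, hb, by exact_mod_cast hab, ?_⟩)
    rw [← clopenValues_combo, h]
  intro μ hμ
  have hmem : clopenValues μ.toFiniteMeasure ∈ L := ⟨_, ⟨μ, hμ, rfl⟩, rfl⟩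
  rw [← closure_convexHull_extremePoints hLK hLc] at hmem
  exact closure_minimal (convexHull_min hLext hT) hTc hmem

end Cantor

end DynSimplex

theorem approximatelyDivisible_of_finite_extremePoints
    {X : Type*} [TopologicalSpace X] [CompactSpace X]
    [TopologicalSpace.MetrizableSpace X] [TotallyDisconnectedSpace X] [PerfectSpace X]
    [Nonempty X] [MeasurableSpace X] [BorelSpace X]
    (K : Set (MeasureTheory.ProbabilityMeasure X)) (hK : IsCompact K)
    (hconv : DynSimplex.ProbConvex K)
    (hfin : (DynSimplex.ProbExtremePoints K).Finite)
    (hmeas : ∀ μ ∈ K, DynSimplex.Atomless μ ∧ DynSimplex.FullSupport μ) :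
    DynSimplex.ApproximatelyDivisible K := by
  intro A hA n hn ε hε
  have : Fintype (DynSimplex.ProbExtremePoints K) := hfin.fintype
  have hsub : DynSimplex.ProbExtremePoints K ⊆ K := by
    rintro μ ⟨⟨ν, hν, hνμ⟩, -⟩
    have : ν = μ := Subtype.ext (congrArg FiniteMeasure.toMeasure hνμ)
    exact this ▸ hν
  obtain ⟨B, hB, hBA, hBμ⟩ := DynSimplex.exists_approx_div
    (fun i : DynSimplex.ProbExtremePoints K => (i : ProbabilityMeasure X))
    (fun i => (hmeas _ (hsub i.2)).1) hA n hn hε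
  refine ⟨B, hB, hBA, ?_⟩
  let clA : TopologicalSpace.Clopens X := ⟨A, hA⟩
  let clB : TopologicalSpace.Clopens X := ⟨B, hB⟩
  refine DynSimplex.clopenValues_mem_of_extremePoints hK hconv
    (T := {f | f clA - ε ≤ n * f clB ∧ n * f clB ≤ f clA}) ?_ ?_ (fun μ hμ => hBμ ⟨μ, hμ⟩)
  · have hcA : Continuous fun f : TopologicalSpace.Clopens X → ℝ => f clA := continuous_apply clA
    have hcB : Continuous fun f : TopologicalSpace.Clopens X → ℝ => n * f clB :=
      (continuous_apply clB).const_mul _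
    exact (isClosed_le (hcA.sub continuous_const) hcB).inter (isClosed_le hcB hcA)
  · rintro f ⟨hf1, hf2⟩ g ⟨hg1, hg2⟩ a b ha hb hab
    simp only [Set.mem_ofPred_eq, Pi.add_apply, Pi.smul_apply, smul_eq_mul]
    constructor
    · have : a * ε + b * ε = ε := by rw [← add_mul, hab, one_mul]
      linarith [mul_le_mul_of_nonneg_left hf1 ha, mul_le_mul_of_nonneg_left hg1 hb]
    · linarith [mul_le_mul_of_nonneg_left hf2 ha, mul_le_mul_of_nonneg_left hg2 hb]
end

section
/- Let X be a Cantor space and g a minimal homeomorphism of X. Then the set K_g of all g-invariant Borel probability measures on X is a dynamical simplex; in particular, K_g is approximately divisible. -/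
/-!
Compactness of `K_g` follows from compactness of the space of probability measures, and its
nonemptiness from the Krylov–Bogoliubov argument. By minimality, the orbits hit every nonempty open
set within a bounded time (`IsMinimal.exists_hitting_bound`), which gives full support; as there are
no periodic points, every point has clopen neighbourhoods `Y` with many pairwise disjoint preimages
(`IsMinimal.exists_marker`), so `μ Y` is uniformly small and the measures are atomless.

*Goodness.* Let `μ A < μ B` for every `μ ∈ K_g`, and let `f = 1_A - 1_B`. By Krylov–Bogoliubov, all
sufficiently long Birkhoff sums of `f` are nonpositive (`exists_invariant_integral_nonneg`). Hence
the supremum `Q` of the Birkhoff sums of `f` over all lengths `n ≥ 0` is a maximum over boundedly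
many of them, so it is a continuous integer-valued function, and it satisfies
`Q = max 0 (f + Q ∘ g)`. It follows that `1_A + Q ∘ g - Q = min (1_A + Q ∘ g) 1_B` takes values in
`{0, 1}` and is at most `1_B`: it is the indicator function of a clopen set `C ⊆ B`. As it differs
from `1_A` by a coboundary, `μ C = μ A` for every invariant `μ`.

*Approximate divisibility.* Fix a nonempty clopen `Y` with `n * μ Y ≤ ε` for all invariant `μ`, and
let `U x` be the number modulo `n` of visits of the orbit of `x` to `A` before its first visit to
`Y`. Selecting from `A` the points with `U (g x) = n - 1` amounts to selecting every `n`-th visit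
to `A`, and it gives a clopen `B` with `n 1_B ≤ 1_A + U ∘ g - U ≤ n 1_B + n 1_Y`. Integration
against `μ` gives `n * μ B ≤ μ A ≤ n * μ B + ε`.
-/

open MeasureTheory

open Filter Topology

namespace DynSimplex

/-! ### Integration of continuous functions and of clopen sets -/

section Integration

variable {X : Type*} [TopologicalSpace X] [MeasurableSpace X] [BorelSpace X]

lemma integrable_of_continuous [CompactSpace X] (μ : ProbabilityMeasure X) {f : X → ℝ}
    (hf : Continuous f) :
    Integrable f (μ : Measure X) :=
  hf.integrable_of_hasCompactSupport (HasCompactSupport.of_compactSpace f)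

lemma Preserves.integral_comp {g : X ≃ₜ X} {μ : ProbabilityMeasure X} (h : Preserves g μ)
    (f : X → ℝ) : ∫ x, f (g x) ∂(μ : Measure X) = ∫ x, f x ∂(μ : Measure X) := by
  have hp : MeasurePreserving g (μ : Measure X) μ := ⟨g.continuous.measurable, h⟩
  exact hp.integral_comp g.measurableEmbedding f

lemma integral_indicator_clopen (μ : ProbabilityMeasure X) {A : Set X} (hA : IsClopen A) :
    ∫ x, A.indicator (1 : X → ℝ) x ∂(μ : Measure X) = (μ A : ℝ) := by
  rw [integral_indicator_one hA.isOpen.measurableSet, ProbabilityMeasure.measureReal_eq_coe_coeFn]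

lemma continuous_indicator_clopen {X : Type*} [TopologicalSpace X] {A : Set X} (hA : IsClopen A)
    {M : Type*} [TopologicalSpace M] [Zero M] [One M] : Continuous (A.indicator (1 : X → M)) :=
  continuous_one.indicator (by simp [hA.frontier_eq])

end Integration

/-! ### Invariant measures as limits of empirical measures -/

section KrylovBogoliubov

variable {X : Type*} [TopologicalSpace X] [CompactSpace X]
  [MeasurableSpace X] [BorelSpace X]

/-- The empirical measure `(1 / (n + 1)) ∑_{i ≤ n} δ_{g^i x}` of an orbit segment. -/
noncomputable def empirical (g : X → X) (n : ℕ) (x : X) : ProbabilityMeasure X :=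
  ⟨((n : ENNReal) + 1)⁻¹ • ∑ i ∈ Finset.range (n + 1), Measure.dirac (g^[i] x), ⟨by
    simp only [Measure.smul_apply, Measure.finsetSum_apply, measure_univ, Finset.sum_const,
      Finset.card_range, smul_eq_mul, nsmul_eq_mul, mul_one]
    push_cast
    exact ENNReal.inv_mul_cancel (by simp) (by finiteness)⟩⟩

lemma integral_empirical (g : X → X) (n : ℕ) (x : X) {f : X → ℝ} (hf : Continuous f) :
    ∫ y, f y ∂(empirical g n x : Measure X) = ((n : ℝ) + 1)⁻¹ * birkhoffSum g f (n + 1) x := by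
  change ∫ y, f y ∂(((n : ENNReal) + 1)⁻¹ • ∑ i ∈ Finset.range (n + 1),
    Measure.dirac (g^[i] x)) = _
  rw [integral_smul_measure, integral_finsetSum_measure]
  · simp only [integral_dirac' _ _ hf.stronglyMeasurable, birkhoffSum, smul_eq_mul]
    congr 1
    rw [ENNReal.toReal_inv]
    congr 1
  · intro i _
    exact integrable_of_continuous ⟨Measure.dirac (g^[i] x), inferInstance⟩ hf

/-- Krylov–Bogoliubov: if `f` has nonnegative Birkhoff sums along arbitrarily long orbit segments,
a limit of the corresponding empirical measures is an invariant measure with `∫ f ≥ 0`. -/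
lemma exists_invariant_integral_nonneg [T2Space X] [HasOuterApproxClosed X] (g : X ≃ₜ X)
    {f : X → ℝ} (hf : Continuous f)
    (h : ∀ N : ℕ, ∃ n ≥ N, ∃ x, 0 ≤ birkhoffSum g f (n + 1) x) :
    ∃ μ : ProbabilityMeasure X, Preserves g μ ∧ 0 ≤ ∫ x, f x ∂(μ : Measure X) := by
  choose n hn x hx using h
  let ν : ℕ → ProbabilityMeasure X := fun k => empirical g (n k) (x k)
  let F : Ultrafilter ℕ := Ultrafilter.of atTop
  have hF : (F : Filter ℕ) ≤ atTop := Ultrafilter.of_le _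
  obtain ⟨μ, -, hμ⟩ := isCompact_univ.ultrafilter_le_nhds' (F.map ν) univ_mem
  have hlim : Tendsto ν F (𝓝 μ) := hμ
  have hlimf : ∀ {φ : X → ℝ}, Continuous φ →
      Tendsto (fun k => ∫ y, φ y ∂(ν k : Measure X)) F (𝓝 (∫ y, φ y ∂(μ : Measure X))) := by
    intro φ hφ
    exact ProbabilityMeasure.tendsto_iff_forall_integral_tendsto.1 hlim
      (BoundedContinuousFunction.mkOfCompact ⟨φ, hφ⟩)
  refine ⟨μ, ?_, ?_⟩
  · have : IsProbabilityMeasure ((μ : Measure X).map g) :=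
      Measure.isProbabilityMeasure_map g.continuous.measurable.aemeasurable
    refine ext_of_forall_integral_eq_of_IsFiniteMeasure fun φ => ?_
    rw [g.measurableEmbedding.integral_map]
    have h1 := (hlimf (φ.continuous.comp g.continuous)).sub (hlimf φ.continuous)
    have h2 : Tendsto (fun k => ∫ y, (φ ∘ g) y ∂(ν k : Measure X) -
        ∫ y, φ y ∂(ν k : Measure X)) F (𝓝 0) := by
      refine Tendsto.mono_left ?_ hF
      have hn' : Tendsto n atTop atTop := tendsto_atTop_mono hn tendsto_id
      have h0 : Tendsto (fun k => ((n k : ℝ) + 1)⁻¹ * (‖φ‖ + ‖φ‖)) atTop (𝓝 0) := by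
        have : Tendsto (fun m : ℕ => ((m : ℝ) + 1)⁻¹) atTop (𝓝 0) := by
          simpa using tendsto_one_div_add_atTop_nhds_zero_nat (𝕜 := ℝ)
        simpa using (this.comp hn').mul_const (‖φ‖ + ‖φ‖)
      refine squeeze_zero_norm (fun k => ?_) h0
      rw [integral_empirical _ _ _ (φ.continuous.comp g.continuous),
        integral_empirical _ _ _ φ.continuous, ← mul_sub]
      have hb : birkhoffSum g (φ ∘ g) (n k + 1) (x k) = birkhoffSum g φ (n k + 1) (g (x k)) := by
        simp only [birkhoffSum, Function.comp_apply, ← Function.iterate_succ_apply,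
          Function.iterate_succ_apply']
      rw [hb, birkhoffSum_apply_sub_birkhoffSum, norm_mul, norm_inv]
      have : ‖(n k : ℝ) + 1‖ = (n k : ℝ) + 1 := Real.norm_of_nonneg (by positivity)
      rw [this]
      gcongr
      exact (norm_sub_le _ _).trans (add_le_add (φ.norm_coe_le_norm _) (φ.norm_coe_le_norm _))
    exact sub_eq_zero.1 (tendsto_nhds_unique h1 h2)
  · refine ge_of_tendsto (hlimf hf) (Eventually.of_forall fun k => ?_)
    rw [integral_empirical _ _ _ hf]
    exact mul_nonneg (by positivity) (hx k)

end KrylovBogoliubov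

/-! ### Maximal Birkhoff sums and goodness -/

section Queue

variable {X : Type*}

/-- The maximum of the Birkhoff sums of `f` of length at most `n`, in the form of a Lindley
recursion: the length of a queue with net input `f`, read along the forward orbit. -/
def queue (g : X → X) (f : X → ℤ) : ℕ → X → ℤ
  | 0 => fun _ => 0
  | n + 1 => fun x => max 0 (f x + queue g f n (g x))

lemma queue_nonneg (g : X → X) (f : X → ℤ) (n : ℕ) (x : X) : 0 ≤ queue g f n x := by
  cases n <;> simp [queue]

lemma exists_queue_eq (g : X → X) (f : X → ℤ) (n : ℕ) (x : X) :
    ∃ k ≤ n, queue g f n x = birkhoffSum g f k x := by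
  induction n generalizing x with
  | zero => exact ⟨0, le_rfl, by simp [queue]⟩
  | succ n ih =>
    obtain ⟨k, hk, h⟩ := ih (g x)
    rcases max_choice 0 (f x + queue g f n (g x)) with h' | h'
    · exact ⟨0, by omega, by simpa [queue] using h'⟩
    · exact ⟨k + 1, by omega, by
        rw [birkhoffSum_succ', ← h, ← h']
        rfl⟩

lemma birkhoffSum_le_queue (g : X → X) (f : X → ℤ) (n : ℕ) (x : X) (k : ℕ) (hk : k ≤ n) :
    birkhoffSum g f k x ≤ queue g f n x := by
  induction n generalizing x k with
  | zero => obtain rfl : k = 0 := by omega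
            simp [queue]
  | succ n ih =>
    cases k with
    | zero => simpa using queue_nonneg g f (n + 1) x
    | succ k =>
      rw [birkhoffSum_succ', queue]
      exact le_max_of_le_right (by gcongr; exact ih _ _ (by omega))

/-- If all sums of length greater than `N` are nonpositive, the maximum is attained at length at most
`N`, so that `Q = queue g f N` satisfies `Q x = max 0 (f x + Q (g x))`. -/
lemma queue_succ_eq (g : X → X) (f : X → ℤ) {N : ℕ}
    (h : ∀ n ≥ N, ∀ x, birkhoffSum g f (n + 1) x ≤ 0) (x : X) :
    queue g f (N + 1) x = queue g f N x := by
  apply le_antisymm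
  · obtain ⟨k, hk, hq⟩ := exists_queue_eq g f (N + 1) x
    rw [hq]
    rcases Nat.lt_or_ge N k with hk' | hk'
    · obtain rfl : k = N + 1 := by omega
      exact (h N le_rfl x).trans (queue_nonneg _ _ _ _)
    · exact birkhoffSum_le_queue _ _ _ _ _ hk'
  · obtain ⟨k, hk, hq⟩ := exists_queue_eq g f N x
    rw [hq]
    exact birkhoffSum_le_queue _ _ _ _ _ (by omega)

lemma continuous_queue [TopologicalSpace X] {g : X → X} (hg : Continuous g) {f : X → ℤ}
    (hf : Continuous f) (n : ℕ) : Continuous (queue g f n) := by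
  induction n with
  | zero => exact continuous_const
  | succ n ih => exact continuous_const.max (hf.add (ih.comp hg))

end Queue

/-- The clopen set is `C = {x ∈ B | x ∈ A ∨ 1 ≤ Q (g x)}`, where `Q` is the stabilised queue with
net input `1_A - 1_B`; then `1_C = 1_A + Q ∘ g - Q`. -/
lemma good_invariant {X : Type*} [TopologicalSpace X] [CompactSpace X] [T2Space X]
    [MeasurableSpace X] [BorelSpace X] [HasOuterApproxClosed X] (g : X ≃ₜ X) :
    Good {μ : ProbabilityMeasure X | Preserves g μ} := by
  intro A B hA hB hlt
  let f : X → ℤ := fun x => A.indicator 1 x - B.indicator 1 x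
  have hf : Continuous f := (continuous_indicator_clopen hA).sub (continuous_indicator_clopen hB)
  have hfR : Continuous (fun x => (f x : ℝ)) := continuous_of_discreteTopology.comp hf
  have hcast : ∀ (S : Set X) x, ((S.indicator (1 : X → ℤ) x : ℤ) : ℝ) = S.indicator 1 x := by
    intro S x
    by_cases hx : x ∈ S <;> simp [hx]
  have hS : ∃ N : ℕ, ∀ n ≥ N, ∀ x, birkhoffSum g f (n + 1) x ≤ 0 := by
    by_contra! hcon
    obtain ⟨μ, hμ, hnonneg⟩ := exists_invariant_integral_nonneg g hfR (fun N => by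
      obtain ⟨n, hn, x, hx⟩ := hcon N
      refine ⟨n, hn, x, ?_⟩
      have : birkhoffSum g (fun x => (f x : ℝ)) (n + 1) x = (birkhoffSum g f (n + 1) x : ℤ) := by
        simp [birkhoffSum]
      rw [this]
      exact_mod_cast hx.le)
    have h1 : ∫ x, (f x : ℝ) ∂(μ : Measure X) = (μ A : ℝ) - μ B := by
      rw [← integral_indicator_clopen μ hA, ← integral_indicator_clopen μ hB, ← integral_sub
        (integrable_of_continuous μ (continuous_indicator_clopen hA))
        (integrable_of_continuous μ (continuous_indicator_clopen hB))]
      simp [f, hcast]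
    have h2 : (μ A : ℝ) < μ B := by exact_mod_cast hlt μ hμ
    linarith
  obtain ⟨N, hN⟩ := hS
  let Q : X → ℤ := queue g f N
  have hQc : Continuous Q := continuous_queue g.continuous hf N
  have hQ : ∀ x, Q x = max 0 (f x + Q (g x)) := fun x => (queue_succ_eq g f hN x).symm
  have hQ0 : ∀ x, 0 ≤ Q x := queue_nonneg g f N
  let C : Set X := B ∩ (A ∪ (Q ∘ g) ⁻¹' Set.Ici 1)
  have hC : IsClopen C := hB.inter (hA.union
    ((isClopen_discrete (Set.Ici (1 : ℤ))).preimage (hQc.comp g.continuous)))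
  refine ⟨C, hC, Set.inter_subset_left, fun μ hμ => ?_⟩
  have key : ∀ x, C.indicator (1 : X → ℤ) x = A.indicator 1 x + Q (g x) - Q x := by
    intro x
    have h1 := hQ x
    have h2 := hQ0 (g x)
    by_cases ha : x ∈ A <;> by_cases hb : x ∈ B <;> by_cases hq : 1 ≤ Q (g x) <;>
      simp [C, f, ha, hb, hq] at h1 ⊢ <;> omega
  have hQR : Continuous (fun x => (Q x : ℝ)) := continuous_of_discreteTopology.comp hQc
  have hI : ∫ x, C.indicator (1 : X → ℝ) x ∂(μ : Measure X) =
      ∫ x, (A.indicator (1 : X → ℝ) x + (Q (g x) : ℝ) - Q x) ∂(μ : Measure X) := by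
    congr 1 with x
    rw [← hcast, ← hcast, key]
    push_cast
    rfl
  rw [integral_sub, integral_add, hμ.integral_comp (fun x => (Q x : ℝ)),
    integral_indicator_clopen μ hC, integral_indicator_clopen μ hA] at hI
  · have : (μ C : ℝ) = μ A := by linarith
    exact_mod_cast this
  · exact integrable_of_continuous μ (continuous_indicator_clopen hA)
  · exact integrable_of_continuous μ (hQR.comp g.continuous)
  · exact integrable_of_continuous μ
      ((continuous_indicator_clopen hA).add (hQR.comp g.continuous))
  · exact integrable_of_continuous μ hQR

/-! ### Hitting times and marker sets of minimal homeomorphisms -/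

section Minimal

variable {X : Type*} [TopologicalSpace X]

lemma zpow_natCast_apply (g : X ≃ₜ X) (n : ℕ) (x : X) :
    (g.toEquiv ^ (n : ℤ)) x = g^[n] x := by
  rw [zpow_natCast, ← Equiv.Perm.iterate_eq_pow]
  rfl

lemma continuous_zpow_apply (g : X ≃ₜ X) (n : ℤ) : Continuous (fun x => (g.toEquiv ^ n) x) := by
  cases n with
  | ofNat n =>
    have : (fun x => (g.toEquiv ^ (Int.ofNat n)) x) = g^[n] :=
      funext fun x => zpow_natCast_apply g n x
    rw [this]
    exact g.continuous.iterate n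
  | negSucc n =>
    have : (fun x => (g.toEquiv ^ (Int.negSucc n)) x) = g.symm^[n + 1] := by
      funext x
      rw [zpow_negSucc, ← inv_pow, ← Equiv.Perm.iterate_eq_pow]
      rfl
    rw [this]
    exact g.symm.continuous.iterate (n + 1)

/-- By compactness, finitely many translates of `U` cover `X`; shifting them by a large power of
`g` makes all the exponents nonnegative. -/
lemma IsMinimal.exists_hitting_bound [CompactSpace X] {g : X ≃ₜ X} (hg : IsMinimal g) {U : Set X}
    (hU : IsOpen U) (hne : U.Nonempty) : ∃ M : ℕ, ∀ x, ∃ j < M, g^[j] x ∈ U := by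
  obtain ⟨t, ht⟩ := isCompact_univ.elim_finite_subcover
    (fun n : ℤ => (fun x => (g.toEquiv ^ n) x) ⁻¹' U)
    (fun n => hU.preimage (continuous_zpow_apply g n)) (fun x _ => by
      obtain ⟨_, hy, n, rfl⟩ := (hg x).inter_open_nonempty U hU hne
      exact Set.mem_iUnion.2 ⟨n, hy⟩)
  let M := t.sup Int.natAbs
  refine ⟨2 * M + 1, fun x => ?_⟩
  have hx := ht (Set.mem_univ (g^[M] x))
  simp only [Set.mem_iUnion, Set.mem_preimage] at hx
  obtain ⟨n, hn, hmem⟩ := hx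
  have hnM : n.natAbs ≤ M := Finset.le_sup (f := Int.natAbs) hn
  refine ⟨(n + M).toNat, by omega, ?_⟩
  rw [← zpow_natCast_apply, Int.toNat_of_nonneg (by omega), zpow_add, Equiv.Perm.mul_apply,
    zpow_natCast_apply]
  exact hmem

/-- A periodic orbit would be a finite dense set, hence all of `X`. -/
lemma IsMinimal.iterate_ne [T1Space X] [PerfectSpace X] {g : X ≃ₜ X} (hg : IsMinimal g) (x : X)
    {p : ℕ} (hp : 0 < p) : g^[p] x ≠ x := by
  intro h
  have hz : (g.toEquiv ^ (p : ℤ)) x = x := by rw [zpow_natCast_apply, h]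
  have hsub : (Set.range fun n : ℤ => (g.toEquiv ^ n) x) ⊆
      (fun i : ℕ => g^[i] x) '' (Finset.range p : Set ℕ) := by
    rintro _ ⟨n, rfl⟩
    have hp' : (0 : ℤ) < p := by exact_mod_cast hp
    refine ⟨(n % p).toNat, ?_, ?_⟩
    · have := Int.emod_lt_of_pos n hp'
      have := Int.emod_nonneg n hp'.ne'
      simp only [Finset.coe_range, Set.mem_Iio]
      omega
    · simp only
      rw [← zpow_natCast_apply, Int.toNat_of_nonneg (Int.emod_nonneg n hp'.ne')]
      conv_rhs => rw [← Int.emod_add_mul_ediv n p, zpow_add, Equiv.Perm.mul_apply, zpow_mul]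
      rw [Function.IsFixedPt.perm_zpow hz]
  have hfin : (Set.range fun n : ℤ => (g.toEquiv ^ n) x).Finite :=
    ((Finset.finite_toSet _).image _).subset hsub
  have huniv : (Set.univ : Set X).Finite := by
    rw [← (hg x).closure_eq, hfin.isClosed.closure_eq]
    exact hfin
  have hacc : (𝓝[≠] x).NeBot := by
    simpa [AccPt] using PerfectSpace.univ_preperfect x (Set.mem_univ x)
  exact infinite_of_mem_nhds x univ_mem huniv

/-- Every point has a clopen neighbourhood whose first `k` preimages are pairwise disjoint. -/
lemma IsMinimal.exists_marker [T2Space X] [CompactSpace X] [TotallyDisconnectedSpace X]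
    [PerfectSpace X] {g : X ≃ₜ X} (hg : IsMinimal g) (x : X) (k : ℕ) :
    ∃ Y : Set X, IsClopen Y ∧ x ∈ Y ∧
      ∀ p, 0 < p → p < k → Disjoint Y (g^[p] ⁻¹' Y) := by
  induction k with
  | zero => exact ⟨Set.univ, isClopen_univ, Set.mem_univ x, fun p _ h => by omega⟩
  | succ k ih =>
    obtain ⟨Y, hY, hxY, hd⟩ := ih
    rcases Nat.eq_zero_or_pos k with rfl | hk
    · exact ⟨Y, hY, hxY, fun p _ _ => by omega⟩
    obtain ⟨U, V, hU, hV, hxU, hxV, hUV⟩ := t2_separation (hg.iterate_ne x hk).symm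
    obtain ⟨W, hW, hxW, hWsub⟩ := compact_exists_isClopen_in_isOpen
      (hU.inter (hV.preimage (g.continuous.iterate k))) ⟨hxU, hxV⟩
    refine ⟨Y ∩ W, hY.inter hW, ⟨hxY, hxW⟩, fun p hp hpk => ?_⟩
    rcases Nat.lt_succ_iff_lt_or_eq.1 hpk with h | rfl
    · exact (hd p hp h).mono Set.inter_subset_left
        (Set.preimage_mono Set.inter_subset_left)
    · rw [Set.disjoint_left]
      intro y hy hy'
      exact Set.disjoint_left.1 hUV (hWsub hy'.2).1 (hWsub hy.2).2

variable [MeasurableSpace X] [BorelSpace X]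

lemma Preserves.measure_preimage_iterate {g : X ≃ₜ X} {μ : ProbabilityMeasure X}
    (h : Preserves g μ) {A : Set X} (hA : MeasurableSet A) (p : ℕ) :
    (μ : Measure X) (g^[p] ⁻¹' A) = (μ : Measure X) A := by
  have hp : MeasurePreserving g (μ : Measure X) μ := ⟨g.continuous.measurable, h⟩
  exact (hp.iterate p).measure_preimage hA.nullMeasurableSet

/-- The first `k` preimages of `Y` are pairwise disjoint and have the same measure as `Y`. -/
lemma Preserves.mul_marker_le {g : X ≃ₜ X} {μ : ProbabilityMeasure X} (h : Preserves g μ)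
    {Y : Set X} (hY : MeasurableSet Y) {k : ℕ}
    (hd : ∀ p, 0 < p → p < k → Disjoint Y (g^[p] ⁻¹' Y)) : (k : ℝ) * μ Y ≤ 1 := by
  have hmeas : ∀ i, MeasurableSet (g^[i] ⁻¹' Y) :=
    fun i => (g.continuous.iterate i).measurable hY
  have hlt : ∀ i j, i < j → j < k → Disjoint (g^[i] ⁻¹' Y) (g^[j] ⁻¹' Y) := by
    intro i j hij hj
    have : g^[j] ⁻¹' Y = g^[i] ⁻¹' (g^[j - i] ⁻¹' Y) := by
      rw [← Set.preimage_comp, ← Function.iterate_add, Nat.sub_add_cancel hij.le]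
    rw [this]
    exact (hd (j - i) (by omega) (by omega)).preimage _
  have hpd : (Finset.range k : Set ℕ).PairwiseDisjoint (fun i => g^[i] ⁻¹' Y) := by
    intro i hi j hj hij
    simp only [Finset.coe_range, Set.mem_Iio] at hi hj
    rcases Nat.lt_or_gt_of_ne hij with h' | h'
    · exact hlt i j h' hj
    · exact (hlt j i h' hi).symm
  have hsum := measure_biUnion_finset (μ := (μ : Measure X)) hpd (fun i _ => hmeas i)
  simp only [h.measure_preimage_iterate hY, Finset.sum_const, Finset.card_range,
    nsmul_eq_mul] at hsum
  have hle : (k : ENNReal) * (μ : Measure X) Y ≤ 1 := hsum ▸ prob_le_one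
  rw [← ProbabilityMeasure.ennreal_coeFn_eq_coeFn_toMeasure] at hle
  exact_mod_cast hle

end Minimal

/-! ### Approximate divisibility -/

section Divisibility

variable {X : Type*}

open Classical in
/-- The number modulo `n` of visits to `A` along the forward orbit, before its first visit to the
marker set `Y` (computed on the first `m` orbit points only). -/
noncomputable def counter (g : X → X) (A Y : Set X) (n : ℕ) : ℕ → X → ℕ
  | 0 => fun _ => 0
  | m + 1 => fun x => if x ∈ Y then 0 else (counter g A Y n m (g x) + A.indicator 1 x) % n

lemma counter_lt (g : X → X) (A Y : Set X) {n : ℕ} (hn : 0 < n) (m : ℕ) (x : X) :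
    counter g A Y n m x < n := by
  cases m with
  | zero => exact hn
  | succ m =>
    simp only [counter]
    split_ifs
    · exact hn
    · exact Nat.mod_lt _ hn

/-- Once the orbit segment meets `Y`, lengthening it does not change the counter. -/
lemma counter_succ_eq (g : X → X) (A Y : Set X) (n m : ℕ) (x : X)
    (h : ∃ j < m, g^[j] x ∈ Y) : counter g A Y n (m + 1) x = counter g A Y n m x := by
  induction m generalizing x with
  | zero => obtain ⟨j, hj, -⟩ := h; omega
  | succ m ih =>
    by_cases hx : x ∈ Y
    · simp [counter, hx]
    · obtain ⟨j, hj, hmem⟩ := h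
      cases j with
      | zero => exact absurd hmem hx
      | succ j =>
        have := ih (g x) ⟨j, by omega, hmem⟩
        rw [counter]
        simp only [hx, if_false]
        rw [this, counter]
        simp only [hx, if_false]

lemma continuous_counter [TopologicalSpace X] {g : X → X} (hg : Continuous g) {A Y : Set X}
    (hA : IsClopen A) (hY : IsClopen Y) (n m : ℕ) : Continuous (counter g A Y n m) := by
  induction m with
  | zero => exact continuous_const
  | succ m ih =>
    classical
    refine continuous_if (p := fun x => x ∈ Y) (fun x hx => ?_) continuous_const.continuousOn
      (Continuous.continuousOn ?_)
    · rw [Set.ofPred_mem_eq, hY.frontier_eq] at hx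
      exact hx.elim
    · exact (continuous_of_discreteTopology (f := fun a : ℕ => a % n)).comp
        ((ih.comp hg).add (continuous_indicator_clopen hA))

/-- Let `U` be the stabilised counter with a marker set `Y` of small measure, and let `B` consist of
the points of `A` where `U ∘ g` takes its largest value `n - 1`. Then `n 1_B` agrees with
`1_A + U ∘ g - U` off `Y`, and lies between `0` and `n` below it on `Y`. -/
lemma approximatelyDivisible_invariant [TopologicalSpace X] [Nonempty X] [T2Space X]
    [CompactSpace X] [TotallyDisconnectedSpace X] [PerfectSpace X] [MeasurableSpace X]
    [BorelSpace X] {g : X ≃ₜ X} (hg : IsMinimal g) :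
    ApproximatelyDivisible {μ : ProbabilityMeasure X | Preserves g μ} := by
  classical
  intro A hA n hn ε hε
  obtain ⟨k, hk⟩ := exists_nat_gt ((n : ℝ) / ε)
  have hn0 : (0 : ℝ) < n := by exact_mod_cast hn
  have hk0 : (0 : ℝ) < k := lt_trans (by positivity) hk
  obtain ⟨Y, hY, hxY, hd⟩ := hg.exists_marker (Classical.arbitrary X) k
  obtain ⟨M, hM⟩ := hg.exists_hitting_bound hY.isOpen ⟨_, hxY⟩
  let U : X → ℕ := counter g A Y n M
  have hUc : Continuous U := continuous_counter g.continuous hA hY n M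
  have hU : ∀ x, U x = counter g A Y n (M + 1) x :=
    fun x => (counter_succ_eq g A Y n M x (hM x)).symm
  have hUlt : ∀ x, U x < n := counter_lt g A Y hn M
  let B : Set X := A ∩ (U ∘ g) ⁻¹' {n - 1}
  have hB : IsClopen B :=
    hA.inter ((isClopen_discrete ({n - 1} : Set ℕ)).preimage (hUc.comp g.continuous))
  have hcast : ∀ (S : Set X) x, ((S.indicator (1 : X → ℕ) x : ℕ) : ℝ) = S.indicator 1 x := by
    intro S x
    by_cases hx : x ∈ S <;> simp [hx]
  have key : ∀ x, n * B.indicator (1 : X → ℕ) x + U x ≤ A.indicator 1 x + U (g x) ∧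
      A.indicator 1 x + U (g x) ≤ n * B.indicator (1 : X → ℕ) x + U x +
        n * Y.indicator (1 : X → ℕ) x := by
    intro x
    have h1 := hU x
    have h2 := hUlt (g x)
    rw [counter] at h1
    change U x = if x ∈ Y then 0 else (U (g x) + A.indicator 1 x) % n at h1
    by_cases ha : x ∈ A <;> by_cases hy : x ∈ Y <;> by_cases hq : U (g x) = n - 1 <;>
      simp only [B, ha, hy, hq, Set.indicator, Set.mem_inter_iff, Set.mem_preimage,
        Function.comp_apply, Set.mem_singleton_iff, if_true, if_false, and_true,
        and_false, Pi.one_apply, mul_one, mul_zero, add_zero] at h1 ⊢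
    -- What is left lies off `Y`, where the counter increases modulo `n`.
    all_goals try omega
    all_goals first
      | (rw [Nat.sub_add_cancel hn, Nat.mod_self] at h1; omega)
      | (rw [Nat.mod_eq_of_lt (by omega)] at h1; omega)
  have hUR : Continuous (fun x => (U x : ℝ)) := continuous_of_discreteTopology.comp hUc
  refine ⟨B, hB, Set.inter_subset_left, fun μ hμ => ?_⟩
  have iA := integrable_of_continuous μ (continuous_indicator_clopen (M := ℝ) hA)
  have iB := (integrable_of_continuous μ (continuous_indicator_clopen (M := ℝ) hB)).const_mul
    (n : ℝ)
  have iY := (integrable_of_continuous μ (continuous_indicator_clopen (M := ℝ) hY)).const_mul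
    (n : ℝ)
  have iU := integrable_of_continuous μ hUR
  have iUg := integrable_of_continuous μ (hUR.comp g.continuous)
  have hAU : ∫ x, (A.indicator (1 : X → ℝ) x + (U (g x) : ℝ)) ∂(μ : Measure X) =
      μ A + ∫ x, (U x : ℝ) ∂(μ : Measure X) := by
    rw [← integral_indicator_clopen μ hA, ← hμ.integral_comp (fun x => (U x : ℝ))]
    exact integral_add iA iUg
  have hBU : ∫ x, (n * B.indicator (1 : X → ℝ) x + (U x : ℝ)) ∂(μ : Measure X) =
      n * μ B + ∫ x, (U x : ℝ) ∂(μ : Measure X) := by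
    rw [← integral_indicator_clopen μ hB, ← integral_const_mul]
    exact integral_add iB iU
  have hBUY : ∫ x, (n * B.indicator (1 : X → ℝ) x + (U x : ℝ) + n * Y.indicator (1 : X → ℝ) x)
      ∂(μ : Measure X) = n * μ B + ∫ x, (U x : ℝ) ∂(μ : Measure X) + n * μ Y := by
    rw [← hBU, ← integral_indicator_clopen μ hY, ← integral_const_mul (n : ℝ)
      (Y.indicator (1 : X → ℝ))]
    exact integral_add (iB.add iU) iY
  have le1 := integral_mono (iB.add iU) (iA.add iUg) (fun x => by
    have := (key x).1
    simp only [Pi.add_apply, Function.comp_apply, ← hcast]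
    exact_mod_cast this)
  have le2 := integral_mono (iA.add iUg) ((iB.add iU).add iY) (fun x => by
    have := (key x).2
    simp only [Pi.add_apply, Function.comp_apply, ← hcast]
    exact_mod_cast this)
  simp only [Pi.add_apply, Function.comp_apply] at le1 le2
  rw [hBU, hAU] at le1
  rw [hAU, hBUY] at le2
  have hYk := hμ.mul_marker_le hY.isOpen.measurableSet hd
  have hYε : (n : ℝ) * μ Y ≤ ε := by
    have h3 : (n : ℝ) < k * ε := by rwa [div_lt_iff₀ hε] at hk
    have h4 : (0 : ℝ) ≤ μ Y := NNReal.coe_nonneg _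
    nlinarith
  exact ⟨by linarith, by linarith⟩

end Divisibility

/-! ### Compactness, convexity, atoms and support -/

section Properties

variable {X : Type*} [TopologicalSpace X] [MeasurableSpace X] [BorelSpace X]

lemma Preserves.atomless [T2Space X] [CompactSpace X] [TotallyDisconnectedSpace X]
    [PerfectSpace X] {g : X ≃ₜ X} (hg : IsMinimal g) {μ : ProbabilityMeasure X}
    (hμ : Preserves g μ) : Atomless μ := by
  intro x
  by_contra hne
  have hpos : (0 : ℝ) < μ {x} := by exact_mod_cast pos_iff_ne_zero.2 hne
  obtain ⟨k, hk⟩ := exists_nat_gt ((μ {x} : ℝ)⁻¹)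
  obtain ⟨Y, hY, hxY, hd⟩ := hg.exists_marker x k
  have h1 := hμ.mul_marker_le hY.isOpen.measurableSet hd
  have h2 : (μ {x} : ℝ) ≤ μ Y := by
    exact_mod_cast μ.apply_mono (Set.singleton_subset_iff.2 hxY)
  have h3 : 1 < (k : ℝ) * μ {x} := by rwa [inv_lt_iff_one_lt_mul₀ hpos] at hk
  have h4 : (k : ℝ) * μ {x} ≤ k * μ Y := by gcongr
  linarith

lemma Preserves.fullSupport [CompactSpace X] {g : X ≃ₜ X} (hg : IsMinimal g)
    {μ : ProbabilityMeasure X} (hμ : Preserves g μ) : FullSupport μ := by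
  intro U hU hne
  obtain ⟨M, hM⟩ := hg.exists_hitting_bound hU hne
  rw [pos_iff_ne_zero]
  intro h0
  rw [ProbabilityMeasure.null_iff_toMeasure_null] at h0
  have hcov : (Set.univ : Set X) ⊆ ⋃ j : ℕ, g^[j] ⁻¹' U := by
    intro x _
    obtain ⟨j, -, hj⟩ := hM x
    exact Set.mem_iUnion.2 ⟨j, hj⟩
  have hnull : (μ : Measure X) (⋃ j : ℕ, g^[j] ⁻¹' U) = 0 :=
    measure_iUnion_null fun j => by rw [hμ.measure_preimage_iterate hU.measurableSet, h0]
  have := measure_mono_null hcov hnull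
  simp at this

lemma isCompact_invariant [T2Space X] [CompactSpace X] [HasOuterApproxClosed X] (g : X ≃ₜ X) :
    IsCompact {μ : ProbabilityMeasure X | Preserves g μ} := by
  have : {μ : ProbabilityMeasure X | Preserves g μ} =
      {μ | μ.map g.continuous.measurable.aemeasurable = μ} := by
    ext μ
    simp only [Set.mem_ofPred_eq, Preserves]
    rw [← ProbabilityMeasure.toMeasure_map]
    exact ProbabilityMeasure.toMeasure_injective.eq_iff
  rw [this]
  exact (isClosed_eq (ProbabilityMeasure.continuous_map g.continuous) continuous_id).isCompact

lemma probConvex_invariant (g : X ≃ₜ X) :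
    ProbConvex {μ : ProbabilityMeasure X | Preserves g μ} := by
  rintro _ ⟨μ, hμ, rfl⟩ _ ⟨ν, hν, rfl⟩ a b - - hab
  have hm : Measurable g := g.continuous.measurable
  have hprob : IsProbabilityMeasure (a • (μ : Measure X) + b • (ν : Measure X)) := ⟨by
    simp only [Measure.add_apply, Measure.smul_apply, measure_univ, ENNReal.smul_def, smul_eq_mul,
      mul_one]
    exact_mod_cast hab⟩
  refine ⟨⟨_, hprob⟩, ?_, ?_⟩
  · change (a • (μ : Measure X) + b • (ν : Measure X)).map g = a • (μ : Measure X) + b • ν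
    rw [Measure.map_add _ _ hm, Measure.map_smul, Measure.map_smul, hμ, hν]
  · apply Subtype.ext
    rfl

lemma nonempty_invariant [Nonempty X] [T2Space X] [CompactSpace X] [HasOuterApproxClosed X]
    (g : X ≃ₜ X) : {μ : ProbabilityMeasure X | Preserves g μ}.Nonempty := by
  obtain ⟨μ, hμ, -⟩ := exists_invariant_integral_nonneg g (f := fun _ => 0) continuous_const
    fun N => ⟨N, le_rfl, Classical.arbitrary X, by simp [birkhoffSum]⟩
  exact ⟨μ, hμ⟩

end Properties

end DynSimplex

theorem invariantMeasures_of_minimal_is_dynamicalSimplex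
    {X : Type*} [TopologicalSpace X] [CompactSpace X]
    [TopologicalSpace.MetrizableSpace X] [TotallyDisconnectedSpace X] [PerfectSpace X]
    [Nonempty X] [MeasurableSpace X] [BorelSpace X]
    (g : X ≃ₜ X) (hg : DynSimplex.IsMinimal g) :
    DynSimplex.DynamicalSimplex
        {μ : MeasureTheory.ProbabilityMeasure X | DynSimplex.Preserves g μ} ∧
      DynSimplex.ApproximatelyDivisible
        {μ : MeasureTheory.ProbabilityMeasure X | DynSimplex.Preserves g μ} := by
  have hdiv := DynSimplex.approximatelyDivisible_invariant hg
  exact ⟨⟨DynSimplex.nonempty_invariant g, DynSimplex.isCompact_invariant g,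
    DynSimplex.probConvex_invariant g, fun μ hμ => ⟨hμ.atomless hg, hμ.fullSupport hg⟩,
    DynSimplex.good_invariant g, hdiv⟩, hdiv⟩
end

section
/- Let X be a Cantor space and K a good nonempty set of Borel probability measures on X, each of which has full support. If U and V are clopen subsets of X with U ∼_K V, then there exists a homeomorphism g of X with g_*μ = μ for every μ ∈ K and g(U) = V. -/
/-!
The homeomorphism is built by a back-and-forth argument. If `A` and `B` are `K`-equivalent clopen
sets and `C ⊆ A` is clopen, then `B` has a clopen subset `K`-equivalent to `C`: for `C ≠ A`, full
support gives `μ C < μ A = μ B` for every `μ ∈ K`, and goodness applies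
(`exists_isClopen_subset_equiv`).

Hence a pair of clopen partitions of `X` whose corresponding pieces are `K`-equivalent (`Matched`)
can be refined by cutting either partition along a given clopen set and cutting the other one
accordingly (`Matched.exists_cut`, `Matched.exists_step`). Start from `{U, Uᶜ}` and `{V, Vᶜ}` and
run through the countably many clopen sets of `X`, treating each on both sides. Sending a point to
its sequence of labels embeds `X` into `ℕ → ℕ` in two ways, one for each sequence of partitions.
By full support corresponding pieces are simultaneously nonempty, so by compactness the two images
agree (`exists_branch`), and the composition of one embedding with the inverse of the other is a
homeomorphism `g` carrying each piece to its partner. In particular `g '' U = V`; every clopen set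
is a union of pieces at some stage, so `g` preserves the measures in `K` on clopen sets, and
therefore on Borel sets.
-/

open MeasureTheory

namespace DynSimplex

/-! ### Cutting a labelled partition along a set -/

section Cut

variable {X : Type*}

open Classical in
/-- The labelling that cuts every fibre of `f` along `W`: the label of `x` is `2 * f x + 1` on
`W` and `2 * f x` off `W`. -/
noncomputable def cut (f : X → ℕ) (W : Set X) (x : X) : ℕ :=
  2 * f x + if x ∈ W then 1 else 0

lemma cut_div (f : X → ℕ) (W : Set X) (x : X) : cut f W x / 2 = f x := by
  unfold cut; split_ifs <;> omega

lemma cut_mod (f : X → ℕ) (W : Set X) (x : X) : cut f W x % 2 = 1 ↔ x ∈ W := by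
  unfold cut; split_ifs with h <;> simp [h]

lemma preimage_cut_odd (f : X → ℕ) (W : Set X) (i : ℕ) :
    cut f W ⁻¹' {2 * i + 1} = f ⁻¹' {i} ∩ W := by
  ext x
  simp only [cut, Set.mem_preimage, Set.mem_singleton_iff, Set.mem_inter_iff]
  split_ifs with h <;> grind

lemma preimage_cut_even (f : X → ℕ) (W : Set X) (i : ℕ) :
    cut f W ⁻¹' {2 * i} = f ⁻¹' {i} \ W := by
  ext x
  simp only [cut, Set.mem_preimage, Set.mem_singleton_iff, Set.mem_sdiff]
  split_ifs with h <;> grind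

end Cut

/-! ### Matched partitions and their refinements -/

section BackAndForth

set_option linter.unusedSectionVars false

variable {X : Type*} [TopologicalSpace X] [MeasurableSpace X] [OpensMeasurableSpace X]

lemma inter_add_diff (μ : ProbabilityMeasure X) (A : Set X) {W : Set X} (hW : IsClopen W) :
    μ (A ∩ W) + μ (A \ W) = μ A := by
  have h := measure_inter_add_sdiff (μ := (μ : Measure X)) A hW.isOpen.measurableSet
  simp only [← ProbabilityMeasure.ennreal_coeFn_eq_coeFn_toMeasure] at h
  exact_mod_cast h

/-- Goodness transports clopen subsets between `K`-equivalent clopen sets. Full support makes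
the inequality `μ C < μ B` strict as soon as `C` is a proper subset of `A`. -/
lemma exists_isClopen_subset_equiv {K : Set (ProbabilityMeasure X)} (hgood : Good K)
    (hsupp : ∀ μ ∈ K, FullSupport μ) {A B C : Set X} (hA : IsClopen A) (hB : IsClopen B)
    (hC : IsClopen C) (hAB : ∀ μ ∈ K, μ A = μ B) (hCA : C ⊆ A) :
    ∃ D, IsClopen D ∧ D ⊆ B ∧ ∀ μ ∈ K, μ D = μ C := by
  by_cases h : (A \ C).Nonempty
  · refine hgood C B hC hB fun μ hμ => ?_
    have hpos := hsupp μ hμ (A \ C) (hA.diff hC).isOpen h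
    have hsum := inter_add_diff μ A hC
    rw [Set.inter_eq_right.2 hCA] at hsum
    rw [← hAB μ hμ, ← hsum]
    exact lt_add_of_pos_right _ hpos
  · have hAC : A = C :=
      (Set.sdiff_eq_empty.1 (Set.not_nonempty_iff_eq_empty.1 h)).antisymm hCA
    exact ⟨B, hB, subset_rfl, fun μ hμ => by rw [← hAB μ hμ, hAC]⟩

/-- A stage of the back-and-forth construction: two clopen partitions of `X`, encoded as the
fibres of continuous maps `f`, `h` to the discrete space `ℕ`, such that fibres with the same
label are `K`-equivalent. -/
def Matched (K : Set (ProbabilityMeasure X)) (f h : X → ℕ) : Prop :=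
  Continuous f ∧ Continuous h ∧ ∀ i, ∀ μ ∈ K, μ (f ⁻¹' {i}) = μ (h ⁻¹' {i})

lemma Matched.symm {K : Set (ProbabilityMeasure X)} {f h : X → ℕ} (H : Matched K f h) :
    Matched K h f :=
  ⟨H.2.1, H.1, fun i μ hμ => (H.2.2 i μ hμ).symm⟩

lemma continuous_cut {f : X → ℕ} (hf : Continuous f) {W : Set X} (hW : IsClopen W) :
    Continuous (cut f W) := by
  refine continuous_discrete_rng.2 fun b => ?_
  have hfi : ∀ i, IsOpen (f ⁻¹' {i}) := fun i => (isOpen_discrete _).preimage hf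
  rcases Nat.even_or_odd' b with ⟨i, rfl | rfl⟩
  · rw [preimage_cut_even]; exact (hfi i).sdiff hW.isClosed
  · rw [preimage_cut_odd]; exact (hfi i).inter hW.isOpen

/-- The extension step: any clopen cut of the first partition can be matched by a clopen cut
of the second one, chosen fibre by fibre. -/
lemma Matched.exists_cut {K : Set (ProbabilityMeasure X)} (hgood : Good K)
    (hsupp : ∀ μ ∈ K, FullSupport μ) {f h : X → ℕ} (H : Matched K f h) {W : Set X}
    (hW : IsClopen W) : ∃ W', Matched K (cut f W) (cut h W') := by
  obtain ⟨hf, hh, heq⟩ := H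
  have hfi : ∀ i, IsClopen (f ⁻¹' {i}) := fun i => (isClopen_discrete _).preimage hf
  have hhi : ∀ i, IsClopen (h ⁻¹' {i}) := fun i => (isClopen_discrete _).preimage hh
  choose D hD hDsub hDeq using fun i => exists_isClopen_subset_equiv hgood hsupp (hfi i) (hhi i)
    ((hfi i).inter hW) (heq i) Set.inter_subset_left
  have hmem : ∀ y i, y ∈ D i → h y = i := fun y i hy => hDsub i hy
  have hW' : IsClopen (⋃ i, D i) := by
    refine ⟨?_, isOpen_iUnion fun i => (hD i).isOpen⟩
    have : (⋃ i, D i)ᶜ = ⋃ i, h ⁻¹' {i} \ D i := by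
      ext y
      simp only [Set.mem_compl_iff, Set.mem_iUnion, not_exists, Set.mem_sdiff, Set.mem_preimage,
        Set.mem_singleton_iff]
      constructor
      · exact fun hy => ⟨h y, rfl, hy _⟩
      · rintro ⟨i, rfl, hy⟩ j hj
        exact hy (hmem y j hj ▸ hj)
    rw [← isOpen_compl_iff, this]
    exact isOpen_iUnion fun i => ((hhi i).diff (hD i)).isOpen
  have hinter : ∀ i, h ⁻¹' {i} ∩ ⋃ j, D j = D i := by
    intro i
    ext y
    simp only [Set.mem_inter_iff, Set.mem_preimage, Set.mem_singleton_iff, Set.mem_iUnion]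
    constructor
    · rintro ⟨rfl, j, hj⟩
      exact hmem y j hj ▸ hj
    · exact fun hy => ⟨hmem y i hy, i, hy⟩
  have hodd : ∀ i, ∀ μ ∈ K, μ (f ⁻¹' {i} ∩ W) = μ (h ⁻¹' {i} ∩ ⋃ j, D j) := fun i μ hμ => by
    rw [hinter, hDeq i μ hμ]
  refine ⟨⋃ i, D i, continuous_cut hf hW, continuous_cut hh hW', fun b μ hμ => ?_⟩
  rcases Nat.even_or_odd' b with ⟨i, rfl | rfl⟩
  · rw [preimage_cut_even, preimage_cut_even]
    have h1 := inter_add_diff μ (f ⁻¹' {i}) hW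
    have h2 := inter_add_diff μ (h ⁻¹' {i}) hW'
    rw [heq i μ hμ, ← h2, hodd i μ hμ] at h1
    exact add_left_cancel h1
  · rw [preimage_cut_odd, preimage_cut_odd, hodd i μ hμ]

/-- One round of back-and-forth: both partitions are refined, compatibly, so that each of them
decides membership in `W`. -/
lemma Matched.exists_step {K : Set (ProbabilityMeasure X)} (hgood : Good K)
    (hsupp : ∀ μ ∈ K, FullSupport μ) {f h : X → ℕ} (H : Matched K f h) {W : Set X}
    (hW : IsClopen W) : ∃ f' h', Matched K f' h' ∧ (∀ x, f' x / 4 = f x) ∧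
      (∀ y, h' y / 4 = h y) ∧ (∀ x, f' x / 2 % 2 = 1 ↔ x ∈ W) ∧
      (∀ y, h' y % 2 = 1 ↔ y ∈ W) := by
  obtain ⟨W₁, H₁⟩ := H.exists_cut hgood hsupp hW
  obtain ⟨W₂, H₂⟩ := H₁.symm.exists_cut hgood hsupp hW
  refine ⟨_, _, H₂.symm, fun x => ?_, fun y => ?_, fun x => ?_, fun y => cut_mod _ _ _⟩
  · rw [show 4 = 2 * 2 from rfl, ← Nat.div_div_eq_div_mul, cut_div, cut_div]
  · rw [show 4 = 2 * 2 from rfl, ← Nat.div_div_eq_div_mul, cut_div, cut_div]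
  · rw [cut_div, cut_mod]

/-- Matched labellings give the same measure to preimages of every set of labels. -/
lemma Matched.measure_preimage {K : Set (ProbabilityMeasure X)} {f h : X → ℕ}
    (H : Matched K f h) {μ : ProbabilityMeasure X} (hμ : μ ∈ K) (S : Set ℕ) :
    (μ : Measure X) (f ⁻¹' S) = (μ : Measure X) (h ⁻¹' S) := by
  have hf := H.1.measurable
  have hh := H.2.1.measurable
  have : (μ : Measure X).map f = (μ : Measure X).map h := by
    refine Measure.ext_of_singleton fun i => ?_
    rw [Measure.map_apply hf (MeasurableSet.of_discrete),
      Measure.map_apply hh (MeasurableSet.of_discrete),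
      ← ProbabilityMeasure.ennreal_coeFn_eq_coeFn_toMeasure,
      ← ProbabilityMeasure.ennreal_coeFn_eq_coeFn_toMeasure, H.2.2 i μ hμ]
  rw [← Measure.map_apply hf (MeasurableSet.of_discrete), this,
    Measure.map_apply hh (MeasurableSet.of_discrete)]

lemma Matched.exists_eq {K : Set (ProbabilityMeasure X)} (hne : K.Nonempty)
    (hsupp : ∀ μ ∈ K, FullSupport μ) {f h : X → ℕ} (H : Matched K f h) (x : X) :
    ∃ y, h y = f x := by
  obtain ⟨μ, hμ⟩ := hne
  by_contra! hy
  have hpos := hsupp μ hμ (f ⁻¹' {f x}) ((isOpen_discrete _).preimage H.1) ⟨x, rfl⟩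
  have hempty : h ⁻¹' {f x} = ∅ := Set.eq_empty_of_forall_notMem fun y => hy y
  rw [H.2.2 _ μ hμ, hempty, ProbabilityMeasure.coeFn_empty] at hpos
  exact lt_irrefl _ hpos

/-- Along a refining sequence of matched partitions, every branch `n ↦ f n x` of the first
sequence is a branch of the second one, by compactness. -/
lemma exists_branch [CompactSpace X] {K : Set (ProbabilityMeasure X)} (hne : K.Nonempty)
    (hsupp : ∀ μ ∈ K, FullSupport μ) {f h : ℕ → X → ℕ} (H : ∀ n, Matched K (f n) (h n))
    (hf : ∀ n x, f (n + 1) x / 4 = f n x) (hh : ∀ n y, h (n + 1) y / 4 = h n y) (x : X) :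
    ∃ y, ∀ n, h n y = f n x := by
  have hcl : ∀ n, IsClosed (h n ⁻¹' {f n x}) := fun n =>
    (isClosed_discrete _).preimage (H n).2.1
  obtain ⟨y, hy⟩ := IsCompact.nonempty_iInter_of_sequence_nonempty_isCompact_isClosed
    (fun n => h n ⁻¹' {f n x}) (fun n y (hy : h (n + 1) y = f (n + 1) x) =>
      show h n y = f n x by rw [← hh, hy, hf])
    (fun n => (H n).exists_eq hne hsupp x) (hcl 0).isCompact hcl
  exact ⟨y, fun n => Set.mem_iInter.1 hy n⟩

end BackAndForth

end DynSimplex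

/-! ### The limit homeomorphism -/

open DynSimplex in
theorem exists_measurePreserving_homeomorph_mapsTo
    {X : Type*} [TopologicalSpace X] [CompactSpace X]
    [TopologicalSpace.MetrizableSpace X] [TotallyDisconnectedSpace X] [PerfectSpace X]
    [Nonempty X] [MeasurableSpace X] [BorelSpace X]
    (K : Set (MeasureTheory.ProbabilityMeasure X)) (hne : K.Nonempty)
    (hgood : DynSimplex.Good K) (hsupp : ∀ μ ∈ K, DynSimplex.FullSupport μ)
    (U V : Set X) (hU : IsClopen U) (hV : IsClopen V)
    (hUV : ∀ μ ∈ K, μ U = μ V) :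
    ∃ g : X ≃ₜ X, DynSimplex.PreservesAll K g ∧ g '' U = V := by
  have hsc : SecondCountableTopology X := by
    let _ := TopologicalSpace.metrizableSpaceMetric X
    infer_instance
  have hcount : Countable (TopologicalSpace.Clopens X) :=
    TopologicalSpace.Clopens.countable_iff_secondCountable.2 hsc
  obtain ⟨e, he⟩ := exists_surjective_nat (TopologicalSpace.Clopens X)
  -- Stage zero consists of the partitions `{U, Uᶜ}` and `{V, Vᶜ}`.
  have H0 : Matched K (cut (fun _ => 0) U) (cut (fun _ => 0) V) := by
    refine ⟨continuous_cut continuous_const hU, continuous_cut continuous_const hV,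
      fun b μ hμ => ?_⟩
    rcases Nat.even_or_odd' b with ⟨i, rfl | rfl⟩
    · rw [preimage_cut_even, preimage_cut_even]
      have h1 := inter_add_diff μ ((fun _ : X => 0) ⁻¹' {i}) hU
      rw [← inter_add_diff μ ((fun _ : X => 0) ⁻¹' {i}) hV] at h1
      rcases eq_or_ne 0 i with rfl | hi
      · simp only [Set.preimage_const_of_mem (Set.mem_singleton 0), Set.univ_inter,
          hUV μ hμ] at h1 ⊢
        exact add_left_cancel h1
      · simp [Set.preimage_const_of_notMem (show 0 ∉ ({i} : Set ℕ) from hi)]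
    · rw [preimage_cut_odd, preimage_cut_odd]
      rcases eq_or_ne 0 i with rfl | hi
      · simp [hUV μ hμ]
      · simp [Set.preimage_const_of_notMem (show 0 ∉ ({i} : Set ℕ) from hi)]
  choose F G hFG hF hG hFW hGW using
    fun (n : ℕ) (p : {p : (X → ℕ) × (X → ℕ) // Matched K p.1 p.2}) =>
      p.2.exists_step hgood hsupp (e n).isClopen
  let s : ℕ → {p : (X → ℕ) × (X → ℕ) // Matched K p.1 p.2} := fun n =>
    Nat.rec ⟨(_, _), H0⟩ (fun n p => ⟨(F n p, G n p), hFG n p⟩) n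
  let f : ℕ → X → ℕ := fun n => (s n).1.1
  let h : ℕ → X → ℕ := fun n => (s n).1.2
  have H : ∀ n, Matched K (f n) (h n) := fun n => (s n).2
  have hf : ∀ n x, f (n + 1) x / 4 = f n x := fun n => hF n (s n)
  have hh : ∀ n y, h (n + 1) y / 4 = h n y := fun n => hG n (s n)
  have hfe : ∀ n x, f (n + 1) x / 2 % 2 = 1 ↔ x ∈ e n := fun n => hFW n (s n)
  have hhe : ∀ n y, h (n + 1) y % 2 = 1 ↔ y ∈ e n := fun n => hGW n (s n)
  have hf0 : ∀ x, f 0 x % 2 = 1 ↔ x ∈ U := cut_mod (fun _ => 0) U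
  have hh0 : ∀ y, h 0 y % 2 = 1 ↔ y ∈ V := cut_mod (fun _ => 0) V
  -- The branch maps of the two sequences embed `X` into `ℕ → ℕ` with the same image.
  have sep : ∀ x y : X, (∀ n, x ∈ e n ↔ y ∈ e n) → x = y := by
    intro x y hxy
    by_contra hne'
    obtain ⟨C, hC, hxC, hyC⟩ := exists_isClopen_of_totally_separated hne'
    obtain ⟨n, hn⟩ := he ⟨C, hC⟩
    have := hxy n
    rw [hn] at this
    exact hyC (this.1 hxC)
  have embf : Topology.IsEmbedding (fun x n => f n x) :=
    ((continuous_pi fun n => (H n).1).isClosedEmbedding fun x y hxy => sep x y fun n => by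
      rw [← hfe, ← hfe, show f (n + 1) x = f (n + 1) y from congrFun hxy (n + 1)]).isEmbedding
  have embh : Topology.IsEmbedding (fun x n => h n x) :=
    ((continuous_pi fun n => (H n).2.1).isClosedEmbedding fun x y hxy => sep x y fun n => by
      rw [← hhe, ← hhe, show h (n + 1) x = h (n + 1) y from congrFun hxy (n + 1)]).isEmbedding
  have hrange : Set.range (fun x n => f n x) = Set.range (fun x n => h n x) := by
    apply Set.Subset.antisymm
    · rintro _ ⟨x, rfl⟩
      obtain ⟨y, hy⟩ := exists_branch hne hsupp H hf hh x
      exact ⟨y, funext hy⟩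
    · rintro _ ⟨x, rfl⟩
      obtain ⟨y, hy⟩ := exists_branch hne hsupp (fun n => (H n).symm) hh hf x
      exact ⟨y, funext hy⟩
  let g : X ≃ₜ X :=
    (embf.toHomeomorph.trans (Homeomorph.setCongr hrange)).trans embh.toHomeomorph.symm
  have hg : ∀ n x, h n (g x) = f n x := by
    intro n x
    have h1 : embh.toHomeomorph (g x) = Homeomorph.setCongr hrange (embf.toHomeomorph x) :=
      embh.toHomeomorph.apply_symm_apply _
    exact congrFun (congrArg Subtype.val h1) n
  refine ⟨g, fun μ hμ => ?_, ?_⟩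
  -- Clopen sets form a π-system generating the Borel σ-algebra, and `g` preserves their measure.
  · have hbasis := isTopologicalBasis_isClopen (X := X)
    have hmeas : Measurable g := g.continuous.measurable
    have : IsProbabilityMeasure ((μ : Measure X).map g) :=
      Measure.isProbabilityMeasure_map hmeas.aemeasurable
    refine ext_of_generate_finite {s : Set X | IsClopen s}
      ((BorelSpace.measurable_eq).trans hbasis.borel_eq_generateFrom)
      (fun A hA B hB _ => hA.inter hB) (fun W hW => ?_) (by simp)
    obtain ⟨n, hn⟩ := he ⟨W, hW⟩
    have hWn : W = h (n + 1) ⁻¹' {i | i % 2 = 1} := by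
      ext y
      exact Iff.symm ((hhe n y).trans (by rw [hn]; rfl))
    have hgW : g ⁻¹' W = f (n + 1) ⁻¹' {i | i % 2 = 1} := by
      rw [hWn]
      ext x
      simp [hg]
    rw [Measure.map_apply hmeas hW.isOpen.measurableSet, hgW, (H (n + 1)).measure_preimage hμ,
      ← hWn]
  · have hUV' : ∀ x, g x ∈ V ↔ x ∈ U := fun x => by rw [← hh0, ← hf0, hg]
    ext y
    constructor
    · rintro ⟨x, hx, rfl⟩
      exact (hUV' x).2 hx
    · intro hy
      refine ⟨g.symm y, (hUV' _).1 ?_, g.apply_symm_apply y⟩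
      rwa [g.apply_symm_apply]
end

section
/- Let X be a Cantor space, K a dynamical simplex on X, and G the group of all homeomorphisms of X preserving every measure in K. If g ∈ G is K-saturated, then the topological full group [[g]] is dense in G (with respect to the topology of uniform convergence on Homeo(X)). -/
/-!
Let `h` preserve every measure of `K`. Cut `X` into finitely many clopen pieces `B_i` of small
diameter, encoded as the fibres of a continuous map `p : X → Fin m`. Since `h` preserves the
measures, `h⁻¹(B_i) ∼_K B_i`, so saturation provides `φ_i ∈ [[g]]` with `φ_i(h⁻¹(B_i)) = B_i`.
Gluing the restrictions of the `φ_i` to the sets `h⁻¹(B_i)` gives a homeomorphism `f` (`glue`),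
which again lies in `[[g]]`, and `f x` and `h x` always lie in the same piece `B_i`; hence `f` is
uniformly close to `h`.

Gluing is painless because membership in `[[g]]` amounts to the existence of a locally constant
cocycle `N : X → ℤ` with `h x = g ^ N x x` (`inTopologicalFullGroup_iff`).
-/

open MeasureTheory

/-! ### Gluing and the topological full group -/

namespace DynSimplex

section Gluing

variable {X : Type*} [TopologicalSpace X]

/-- On a compact space, the elements of `[[g]]` are the homeomorphisms acting as powers of `g`
with a locally constant exponent. -/
lemma inTopologicalFullGroup_iff [CompactSpace X] {g h : X ≃ₜ X} :
    InTopologicalFullGroup g h ↔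
      ∃ N : X → ℤ, IsLocallyConstant N ∧ ∀ x, h x = (g.toEquiv ^ N x) x := by
  constructor
  · rintro ⟨k, A, n, hA, hpart, hh⟩
    choose i hi hiu using hpart
    refine ⟨fun x => n (i x), ?_, fun x => hh _ _ (hi x)⟩
    refine IsLocallyConstant.comp (f := i) ?_ n
    rw [IsLocallyConstant.iff_eventually_eq]
    intro x
    filter_upwards [(hA (i x)).isOpen.mem_nhds (hi x)] with y hy
    exact (hiu y _ hy).symm
  · rintro ⟨N, hN, hh⟩
    have hfin : (Set.range N).Finite := hN.range_finite
    have := hfin.to_subtype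
    obtain ⟨k, ⟨e⟩⟩ := Finite.exists_equiv_fin (Set.range N)
    refine ⟨k, fun i => N ⁻¹' {(e.symm i : ℤ)}, fun i => (e.symm i : ℤ),
      fun i => hN.isClopen_fiber _, fun x => ?_, ?_⟩
    · refine ⟨e ⟨N x, x, rfl⟩, by simp, fun i hi => ?_⟩
      rw [← e.symm_apply_eq]
      exact Subtype.ext (Eq.symm hi)
    · intro i x hx
      have hx' : N x = e.symm i := hx
      rw [hh x, hx']

lemma IsLocallyConstant.diag {Y ι : Type*} {q : X → ι} (hq : IsLocallyConstant q)
    {F : ι → X → Y} (hF : ∀ i, IsLocallyConstant (F i)) :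
    IsLocallyConstant fun x => F (q x) x := by
  rw [IsLocallyConstant.iff_eventually_eq]
  intro x
  filter_upwards [hq.eventually_eq x, (hF (q x)).eventually_eq x] with y h₁ h₂
  rw [h₁, h₂]

/-- Homeomorphisms `φ i` carrying the fibre of `p ∘ h` over `i` onto the fibre of `p` over `i`
can be glued to a single homeomorphism `f`, and `f x` lies in the same fibre of `p` as `h x`. -/
lemma glue [CompactSpace X] [T2Space X] {ι : Type*} {p : X → ι} (hp : IsLocallyConstant p)
    (h : X ≃ₜ X) (φ : ι → X ≃ₜ X) (hφ : ∀ i, φ i '' ((p ∘ h) ⁻¹' {i}) = p ⁻¹' {i}) :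
    ∃ f : X ≃ₜ X, ∀ x, f x = φ (p (h x)) x ∧ p (f x) = p (h x) := by
  have h₁ : ∀ x, p (φ (p (h x)) x) = p (h x) := fun x =>
    (hφ (p (h x))).subset ⟨x, rfl, rfl⟩
  have h₂ : ∀ y, p (h ((φ (p y)).symm y)) = p y := fun y => by
    obtain ⟨x, hx, hxy⟩ := (hφ (p y)).superset (show y ∈ p ⁻¹' {p y} from rfl)
    have hx' : p (h x) = p y := hx
    have hsymm : (φ (p y)).symm y = x := by rw [Homeomorph.symm_apply_eq, hxy]
    rw [hsymm, hx']
  let e : X ≃ X :=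
    { toFun := fun x => φ (p (h x)) x
      invFun := fun y => (φ (p y)).symm y
      left_inv := fun x => by simp [h₁]
      right_inv := fun y => by simp [h₂] }
  have hcont : Continuous e := by
    rw [continuous_iff_continuousAt]
    intro x
    refine ((φ (p (h x))).continuous.continuousAt).congr ?_
    filter_upwards [(hp.comp_continuous h.continuous).eventually_eq x] with y hy
    have hy' : p (h y) = p (h x) := hy
    simp [e, hy']
  exact ⟨hcont.homeoOfEquivCompactToT2, fun x => ⟨rfl, h₁ x⟩⟩

end Gluing

end DynSimplex

open DynSimplex

theorem topologicalFullGroup_dense_of_saturated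
    {X : Type*} [TopologicalSpace X] [CompactSpace X]
    [TopologicalSpace.MetrizableSpace X] [TotallyDisconnectedSpace X] [PerfectSpace X]
    [Nonempty X] [MeasurableSpace X] [BorelSpace X]
    (K : Set (MeasureTheory.ProbabilityMeasure X)) (hK : DynSimplex.DynamicalSimplex K)
    (g : X ≃ₜ X) (hg : DynSimplex.PreservesAll K g) (hsat : DynSimplex.KSaturated K g) :
    {h : X ≃ₜ X | DynSimplex.PreservesAll K h} ⊆
      closure {h : X ≃ₜ X | DynSimplex.InTopologicalFullGroup g h} := by
  intro h hh
  let _ : MetricSpace X := TopologicalSpace.metrizableSpaceMetric X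
  rw [closure_induced, Metric.mem_closure_iff]
  intro ε hε
  have hS : {z : X × X | dist z.1 z.2 < ε / 2} ∈ nhdsSet (Set.diagonal X) := by
    rw [mem_nhdsSet_iff_forall]
    rintro ⟨x, y⟩ (rfl : x = y)
    refine (isOpen_lt (by fun_prop) (by fun_prop)).mem_nhds ?_
    simpa using hε
  obtain ⟨m, p, c, hp, hpc⟩ :=
    (ContinuousMap.id X).exists_finite_approximation_of_mem_nhds_diagonal hS
  have hploc : IsLocallyConstant p := (IsLocallyConstant.iff_continuous p).2 hp
  have hclopen : ∀ i, IsClopen (p ⁻¹' {i}) := fun i => hploc.isClopen_fiber i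
  have hex : ∀ i, ∃ φ : X ≃ₜ X, InTopologicalFullGroup g φ ∧
      φ '' ((p ∘ h) ⁻¹' {i}) = p ⁻¹' {i} := by
    intro i
    refine hsat _ _ ((hclopen i).preimage h.continuous) (hclopen i) fun μ hμ => ?_
    have hpres : (μ : MeasureTheory.Measure X).map h = μ := hh μ hμ
    have hmeas : (μ : MeasureTheory.Measure X) (h ⁻¹' (p ⁻¹' {i}))
        = (μ : MeasureTheory.Measure X) (p ⁻¹' {i}) := by
      conv_rhs => rw [← hpres]
      exact (MeasureTheory.Measure.map_apply h.continuous.measurable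
        (hclopen i).isOpen.measurableSet).symm
    exact congrArg ENNReal.toNNReal hmeas
  choose φ hφg hφ using hex
  obtain ⟨f, hf⟩ := glue hploc h φ hφ
  choose N hN hNφ using fun i => inTopologicalFullGroup_iff.1 (hφg i)
  refine ⟨f, ⟨f, inTopologicalFullGroup_iff.2 ⟨fun x => N (p (h x)) x, ?_, fun x => ?_⟩, rfl⟩, ?_⟩
  · exact DynSimplex.IsLocallyConstant.diag (hploc.comp_continuous h.continuous) hN
  · rw [(hf x).1, hNφ]
  · refine ContinuousMap.dist_lt_of_nonempty fun x => ?_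
    have h₁ : dist (h x) (c (p (h x))) < ε / 2 := hpc (h x)
    have h₂ : dist (f x) (c (p (f x))) < ε / 2 := hpc (f x)
    rw [(hf x).2] at h₂
    calc dist (h x) (f x) ≤ dist (h x) (c (p (h x))) + dist (f x) (c (p (h x))) :=
          dist_triangle_right _ _ _
      _ < ε := by linarith
end

section
/- Let X be a Cantor space, K a dynamical simplex on X, and G the group of all homeomorphisms of X preserving every measure in K. If g ∈ G is K-saturated, then g is a minimal homeomorphism of X. -/
/-!
Given a point `x` and a nonempty clopen set `U`, it is enough to find a clopen neighbourhood `A`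
of `x` with `μ A < μ U` for all `μ ∈ K`. Goodness then gives a clopen `C ⊆ U` which is
`K`-equivalent to `A`, saturation gives `h` in the topological full group of `g` with `h '' A = C`,
and `h x ∈ U` is a point of the `g`-orbit of `x`.

Such an `A` exists by compactness of `K` (`exists_clopen_nhd_measure_lt`). For a single `μ`, one
uses that `μ {x} = 0 < μ U` and that `μ` is outer regular. The inequality `μ A < μ U` persists on a
weak-* neighbourhood of `μ` since `A` and `U` are clopen, and finitely many of the
neighbourhoods `A` can be intersected.
-/

open MeasureTheory

namespace DynSimplex

/-- Every point has a clopen neighbourhood whose measure is smaller than that of a given nonempty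
clopen set, simultaneously for all measures of a compact family of atomless, fully supported
measures. -/
theorem exists_clopen_nhd_measure_lt
    {X : Type*} [TopologicalSpace X] [CompactSpace X]
    [TopologicalSpace.MetrizableSpace X] [TotallyDisconnectedSpace X]
    [MeasurableSpace X] [BorelSpace X]
    {K : Set (ProbabilityMeasure X)} (hc : IsCompact K)
    (hK : ∀ μ ∈ K, Atomless μ ∧ FullSupport μ) {U : Set X} (hU : IsClopen U)
    (hne : U.Nonempty) (x : X) :
    ∃ A : Set X, IsClopen A ∧ x ∈ A ∧ ∀ μ ∈ K, μ A < μ U := by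
  letI := TopologicalSpace.metrizableSpaceMetric X
  refine hc.induction_on
    (p := fun S => ∃ A : Set X, IsClopen A ∧ x ∈ A ∧ ∀ μ ∈ S, μ A < μ U) ?_ ?_ ?_ ?_
  · exact ⟨Set.univ, isClopen_univ, Set.mem_univ x, by simp⟩
  · rintro S T hST ⟨A, hA, hx, h⟩
    exact ⟨A, hA, hx, fun μ hμ => h μ (hST hμ)⟩
  · rintro S T ⟨A, hA, hxA, h⟩ ⟨B, hB, hxB, h'⟩
    refine ⟨A ∩ B, hA.inter hB, ⟨hxA, hxB⟩, ?_⟩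
    rintro μ (hμ | hμ)
    · exact (μ.apply_mono Set.inter_subset_left).trans_lt (h μ hμ)
    · exact (μ.apply_mono Set.inter_subset_right).trans_lt (h' μ hμ)
  · intro μ hμ
    have hlt : (μ : Measure X) {x} < (μ : Measure X) U := by
      rw [← μ.ennreal_coeFn_eq_coeFn_toMeasure, ← μ.ennreal_coeFn_eq_coeFn_toMeasure,
        ENNReal.coe_lt_coe, (hK μ hμ).1 x]
      exact (hK μ hμ).2 U hU.isOpen hne
    obtain ⟨V, hxV, hVo, hV⟩ := Set.exists_isOpen_lt_of_lt _ _ hlt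
    obtain ⟨A, hA, hxA, hAV⟩ := compact_exists_isClopen_in_isOpen hVo (hxV rfl)
    have hAU : μ A < μ U := by
      rw [← ENNReal.coe_lt_coe, μ.ennreal_coeFn_eq_coeFn_toMeasure,
        μ.ennreal_coeFn_eq_coeFn_toMeasure]
      exact (measure_mono hAV).trans_lt hV
    refine ⟨{ν | ν A < ν U}, mem_nhdsWithin_of_mem_nhds ?_, A, hA, hxA, fun ν hν => hν⟩
    exact Filter.Tendsto.eventually_lt
      (ProbabilityMeasure.tendsto_measure_of_isClopen_of_tendsto Filter.tendsto_id hA)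
      (ProbabilityMeasure.tendsto_measure_of_isClopen_of_tendsto Filter.tendsto_id hU) hAU

end DynSimplex

theorem minimal_of_saturated
    {X : Type*} [TopologicalSpace X] [CompactSpace X]
    [TopologicalSpace.MetrizableSpace X] [TotallyDisconnectedSpace X] [PerfectSpace X]
    [Nonempty X] [MeasurableSpace X] [BorelSpace X]
    (K : Set (MeasureTheory.ProbabilityMeasure X)) (hK : DynSimplex.DynamicalSimplex K)
    (g : X ≃ₜ X) (hg : DynSimplex.PreservesAll K g) (hsat : DynSimplex.KSaturated K g) :
    DynSimplex.IsMinimal g := by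
  obtain ⟨-, hc, -, hμ, hgood, -⟩ := hK
  intro x
  rw [dense_iff_inter_open]
  rintro W hW ⟨y, hy⟩
  obtain ⟨U, hU, hyU, hUW⟩ := compact_exists_isClopen_in_isOpen hW hy
  obtain ⟨A, hA, hxA, hlt⟩ := DynSimplex.exists_clopen_nhd_measure_lt hc hμ hU ⟨y, hyU⟩ x
  obtain ⟨C, hC, hCU, hCA⟩ := hgood A U hA hU hlt
  obtain ⟨h, ⟨k, P, n, -, hP, hh⟩, himg⟩ := hsat A C hA hC fun μ hm => (hCA μ hm).symm
  obtain ⟨i, hi, -⟩ := hP x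
  exact ⟨h x, hUW (hCU (himg ▸ Set.mem_image_of_mem h hxA)), n i, (hh i x hi).symm⟩
end
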